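/- Let d ≥ 1, 0 < λ ≤ Λ and Θ ≥ 0, and assume ᾱ ∈ (0,1) and C₀ > 0 are such that for every uniformly (λ,Λ)-elliptic G : Sym(d) → ℝ, every viscosity solution h of G(D²h) = 0 in B₁ satisfies ‖h‖_{C^{1,ᾱ}(B_{3/4})} ≤ C₀‖h‖_{L∞(B₁)}. Then for every δ > 0 there exists ε > 0, depending only on δ, d, λ, Λ and Θ, with the following property: whenever F : Sym(d) → ℝ is uniformly (λ,Λ)-elliptic, θ : cl(B₁) → ℝ is continuous with −1 < θ(x) ≤ Θ for all x, q ∈ ℝ^d, f : B₁ → ℝ is continuous with ‖f(·)(1 + |q|)^{−θ(·)}‖_{L∞(B₁)} ≤ ε, and u ∈ C(B₁) is a normalized viscosity solution of |q + Du|^{θ(x)} F(D²u) = f(x) in B₁, then there exists a function h of class C^{1,ᾱ} on B_{3/4} with ‖u − h‖_{L∞(B_{1/2})} ≤ δ and ‖h‖_{C^{1,ᾱ}(B_{3/4})} ≤ C, where C depends only on d, λ and Λ. -/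

import Mathlib

/-!
The proof is by contradiction and compactness: if no `ε` works for some `δ`, there are data
`F n`, `q n`, `u n` with smallness `ε n → 0` none of which is `δ`-close to an admissible `h`, and a
limit of the `u n` turns out to be admissible. Viscosity inequalities are tested with quadratic
polynomials throughout (`TouchA`, `QSub`), and supersolutions are treated as subsolutions for the
reflected operator `M ↦ -F (-M)`.

*Equicontinuity.* A touching polynomial of slope `p` with `|q + p| ≥ κ` gives `F M ≥ -ε C`, with `C`
depending on bounds for `|p|` and `κ` but not on `q` (`SmallSub.touch`). If `|q|` is large this covers
all moderate slopes, and if `|q|` is bounded it covers all sufficiently large slopes. The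
Ishii–Lions doubling argument only uses slopes in one range `N / 4 ≤ |p| ≤ 4 N`, so in both
cases it yields a Lipschitz bound independent of `q` (`ishii_lions`, `lipschitz_est`). The theorem on
sums needed there (`sums_lemma`) is obtained from sup-convolutions and from a Jensen–Alexandrov lemma
(`jensen_alexandrov`). The latter rests on the resolvent `R = (1 + ∂f)⁻¹` of a convex function, which
is `1`-Lipschitz: a convex function has a second-order expansion at `R z` as soon as `R` is
differentiable at `z` with invertible derivative, and the remaining points have a null image, by
Rademacher's theorem and Sard's lemma.

*Passage to the limit.* Along an ultrafilter the operators converge pointwise and the solutions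
converge uniformly on `B_{15/16}` (`exists_limit_operator`, `exists_uniform_limit`). The limit solves
`G (D²h) = 0` (`stability`). Suppose that a quadratic polynomial with Hessian `M` touches `h` strictly
from above while `G M < 0`. After any small tilt of the polynomial, the contact points with `u n` must
approach the critical set `q n + Dφ = 0`, since elsewhere the equation would give `G M ≥ 0`. This pins
the slope at the limiting contact point to a value `-lim q n` that does not depend on the tilt. Hence
`M` is invertible, every point near the original one is a contact point, and the increments of
`h - linear` are all bounded by the single form `M / 2`; so `h - linear` is constant, `M ≥ 0`, and
`G M ≥ 0` by ellipticity, a contradiction.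

*Regularity.* The assumed `C^{1,α}` estimate, applied to `h` rescaled from balls of radius `1/8`
centred in `B_{3/4}`, gives the bound `200 C₀` for `h` on `B_{3/4}` (`limit_regular`).
-/

open Metric Set Filter
open scoped RealInnerProductSpace

noncomputable section

abbrev Euc (d : ℕ) := EuclideanSpace ℝ (Fin d)
abbrev Mat (d : ℕ) := Matrix (Fin d) (Fin d) ℝ

noncomputable def matOpNorm {n : Type*} [Fintype n] [DecidableEq n]
    (M : Matrix n n ℝ) : ℝ := ‖Matrix.toEuclideanCLM (𝕜 := ℝ) M‖

def UniformlyElliptic {d : ℕ} (lam Lam : ℝ) (F : Mat d → ℝ) : Prop :=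
  F 0 = 0 ∧ ∀ M N : Mat d, M.IsHermitian → N.PosSemidef →
    lam * matOpNorm N ≤ F (M + N) - F M ∧ F (M + N) - F M ≤ Lam * matOpNorm N

noncomputable def hessM {d : ℕ} (φ : Euc d → ℝ) (x : Euc d) : Mat d :=
  Matrix.of fun i j =>
    iteratedFDeriv ℝ 2 φ x ![EuclideanSpace.single i 1, EuclideanSpace.single j 1]

def ViscSubSol {d : ℕ} (F : Mat d → ℝ) (θ f : Euc d → ℝ) (q : Euc d) (u : Euc d → ℝ) : Prop :=
  ∀ x₀ ∈ ball (0 : Euc d) 1, ∀ φ : Euc d → ℝ, ContDiffAt ℝ 2 φ x₀ →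
    IsLocalMax (fun x => u x - φ x) x₀ → q + gradient φ x₀ ≠ 0 →
      f x₀ ≤ ‖q + gradient φ x₀‖ ^ (θ x₀) * F (hessM φ x₀)

def ViscSuperSol {d : ℕ} (F : Mat d → ℝ) (θ f : Euc d → ℝ) (q : Euc d) (u : Euc d → ℝ) : Prop :=
  ∀ x₀ ∈ ball (0 : Euc d) 1, ∀ φ : Euc d → ℝ, ContDiffAt ℝ 2 φ x₀ →
    IsLocalMin (fun x => u x - φ x) x₀ → q + gradient φ x₀ ≠ 0 →
      ‖q + gradient φ x₀‖ ^ (θ x₀) * F (hessM φ x₀) ≤ f x₀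

def ViscSol {d : ℕ} (F : Mat d → ℝ) (θ f : Euc d → ℝ) (q : Euc d) (u : Euc d → ℝ) : Prop :=
  ViscSubSol F θ f q u ∧ ViscSuperSol F θ f q u

def ViscSubSolPure {d : ℕ} (F : Mat d → ℝ) (g : Euc d → ℝ) (u : Euc d → ℝ)
    (s : Set (Euc d)) : Prop :=
  ∀ x₀ ∈ s, ∀ φ : Euc d → ℝ, ContDiffAt ℝ 2 φ x₀ →
    IsLocalMax (fun x => u x - φ x) x₀ → g x₀ ≤ F (hessM φ x₀)

def ViscSuperSolPure {d : ℕ} (F : Mat d → ℝ) (g : Euc d → ℝ) (u : Euc d → ℝ)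
    (s : Set (Euc d)) : Prop :=
  ∀ x₀ ∈ s, ∀ φ : Euc d → ℝ, ContDiffAt ℝ 2 φ x₀ →
    IsLocalMin (fun x => u x - φ x) x₀ → F (hessM φ x₀) ≤ g x₀

def ViscSolPure {d : ℕ} (F : Mat d → ℝ) (g : Euc d → ℝ) (u : Euc d → ℝ)
    (s : Set (Euc d)) : Prop :=
  ViscSubSolPure F g u s ∧ ViscSuperSolPure F g u s

open Topology MeasureTheory

/-- A function whose forward increments are quadratically small is nonincreasing: subdivide `[0, 1]` into
equal steps and sum. -/
theorem telescoping_le {ψ : ℝ → ℝ} {C : ℝ}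
    (h : ∀ t s, 0 ≤ t → t ≤ s → s ≤ 1 → ψ s - ψ t ≤ C * (s - t) ^ 2) : ψ 1 ≤ ψ 0 := by
  have key : ∀ m : ℕ, ψ 1 - ψ 0 ≤ C * (1 / ((m : ℝ) + 1)) := by
    intro m
    have hm : (0 : ℝ) < (m : ℝ) + 1 := by positivity
    have step : ∀ k : ℕ, k ≤ m + 1 →
        ψ (k / ((m : ℝ) + 1)) - ψ 0 ≤ k * (C * (1 / ((m : ℝ) + 1)) ^ 2) := by
      intro k
      induction k with
      | zero => intro _; simp
      | succ k ih =>
        intro hk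
        have h1 := ih (by omega)
        have hk' : (k : ℝ) + 1 ≤ m + 1 := by exact_mod_cast hk
        have h2 := h (k / ((m : ℝ) + 1)) ((k + 1 : ℕ) / ((m : ℝ) + 1)) (by positivity)
          (by gcongr; simp) (by rw [div_le_one hm]; exact_mod_cast hk)
        have h3 : ((k + 1 : ℕ) : ℝ) / ((m : ℝ) + 1) - k / ((m : ℝ) + 1) = 1 / ((m : ℝ) + 1) := by
          push_cast; ring
        rw [h3] at h2
        push_cast at h2 ⊢
        linarith
    have := step (m + 1) le_rfl
    push_cast at this
    rw [div_self hm.ne'] at this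
    calc ψ 1 - ψ 0 ≤ _ := this
      _ = _ := by field_simp
  have lim : Tendsto (fun m : ℕ => C * (1 / ((m : ℝ) + 1))) atTop (𝓝 (C * 0)) :=
    tendsto_one_div_add_atTop_nhds_zero_nat.const_mul C
  have := ge_of_tendsto' lim key
  linarith

/-! ### Subgradients and resolvents -/

section Convex
variable {H : Type*} [NormedAddCommGroup H] [InnerProductSpace ℝ H]

/-- `p` is a (global) subgradient of `f` at `x`. -/
def IsSubgrad (f : H → ℝ) (x p : H) : Prop := ∀ y, f x + ⟪p, y - x⟫ ≤ f y

theorem IsSubgrad.mono {f : H → ℝ} {x y p r : H} (h1 : IsSubgrad f x p) (h2 : IsSubgrad f y r) :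
    0 ≤ ⟪p - r, x - y⟫ := by
  have a := h1 y
  have b := h2 x
  rw [← neg_sub x y, inner_neg_right] at a
  rw [inner_sub_left]; linarith

/-- A map `R` with `z - R z ∈ ∂f (R z)` is the resolvent `(1 + ∂f)⁻¹`. Monotonicity of `∂f` makes it
firmly nonexpansive. -/
theorem resolvent_firm {f : H → ℝ} {R : H → H} (hR : ∀ z, IsSubgrad f (R z) (z - R z)) (z z' : H) :
    ‖R z - R z'‖ ^ 2 ≤ ⟪z - z', R z - R z'⟫ := by
  have := (hR z).mono (hR z')
  rw [show z - R z - (z' - R z') = (z - z') - (R z - R z') by abel, inner_sub_left,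
    real_inner_self_eq_norm_sq] at this
  linarith

theorem resolvent_lip {f : H → ℝ} {R : H → H} (hR : ∀ z, IsSubgrad f (R z) (z - R z)) :
    LipschitzWith 1 R := by
  refine LipschitzWith.of_dist_le_mul fun z z' => ?_
  rw [dist_eq_norm, dist_eq_norm, NNReal.coe_one, one_mul]
  have h1 := resolvent_firm hR z z'
  have h2 := real_inner_le_norm (z - z') (R z - R z')
  rcases (norm_nonneg (R z - R z')).eq_or_lt with h | h
  · rw [← h]; exact norm_nonneg _
  · nlinarith

theorem resolvent_of_subgrad {f : H → ℝ} {R : H → H} (hR : ∀ z, IsSubgrad f (R z) (z - R z))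
    {x p : H} (h : IsSubgrad f x p) : R (x + p) = x := by
  have := (hR (x + p)).mono h
  rw [show x + p - R (x + p) - p = -(R (x + p) - x) by abel, inner_neg_left,
    real_inner_self_eq_norm_sq] at this
  have h2 : ‖R (x + p) - x‖ = 0 := by nlinarith [norm_nonneg (R (x + p) - x)]
  exact sub_eq_zero.1 (norm_eq_zero.1 h2)

/-- The resolvent exists for convex `f` (encoded by a selection `g` of subgradients): `R z` minimizes
`f x + ‖x - z‖² / 2`. -/
theorem exists_resolvent [FiniteDimensional ℝ H] {f : H → ℝ} (hf : Continuous f) {g : H → H}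
    (hg : ∀ x, IsSubgrad f x (g x)) : ∃ R : H → H, ∀ z, IsSubgrad f (R z) (z - R z) := by
  have : ∀ z, ∃ x, IsSubgrad f x (z - x) := by
    intro z
    have hc : Continuous fun x => f x + ‖x - z‖ ^ 2 / 2 := by fun_prop
    have hlim : Tendsto (fun x => f x + ‖x - z‖ ^ 2 / 2) (cocompact H) atTop := by
      have h0 : Tendsto (fun x : H => ‖x - z‖) (cocompact H) atTop := by
        have := tendsto_norm_cocompact_atTop (E := H)
        refine tendsto_atTop_mono (fun x => ?_) (tendsto_atTop_add_const_right _ (-‖z‖) this)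
        linarith [norm_sub_norm_le x z]
      have h1 : Tendsto (fun s : ℝ => f z + s * (s / 2 - ‖g z‖)) atTop atTop := by
        refine tendsto_atTop_add_const_left _ _ (Tendsto.atTop_mul_atTop₀ tendsto_id ?_)
        exact tendsto_atTop_add_const_right _ _ (tendsto_id.atTop_div_const (by norm_num))
      refine tendsto_atTop_mono (fun x => ?_) (h1.comp h0)
      have h2 := hg z x
      have h3 := neg_le_of_abs_le (abs_real_inner_le_norm (g z) (x - z))
      simp only [Function.comp]
      nlinarith
    obtain ⟨x, hx⟩ := hc.exists_forall_le hlim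
    refine ⟨x, fun y => ?_⟩
    have key : ∀ t : ℝ, 0 < t → t ≤ 1 →
        0 ≤ (f y - f x - ⟪z - x, y - x⟫) + t * (‖y - x‖ ^ 2 / 2) := by
      intro t ht ht1
      have h1 := hx (x + t • (y - x))
      set w := x + t • (y - x) with hw
      have h2 := hg w x
      have h3 := hg w y
      have e1 : x - w = (-t) • (y - x) := by rw [hw]; module
      have e2 : y - w = (1 - t) • (y - x) := by rw [hw]; module
      rw [e1, inner_smul_right] at h2
      rw [e2, inner_smul_right] at h3
      have e3 : w - z = t • (y - x) - (z - x) := by rw [hw]; module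
      have e4 : ‖w - z‖ ^ 2 = t ^ 2 * ‖y - x‖ ^ 2 - 2 * (t * ⟪z - x, y - x⟫) + ‖x - z‖ ^ 2 := by
        rw [e3, norm_sub_sq_real, norm_smul, inner_smul_left, real_inner_comm, norm_sub_rev x z]
        simp [mul_pow]
      rw [e4] at h1
      have h5 : 0 ≤ t * ((f y - f x - ⟪z - x, y - x⟫) + t * (‖y - x‖ ^ 2 / 2)) := by
        nlinarith
      exact nonneg_of_mul_nonneg_right h5 ht
    by_contra hcon
    push Not at hcon
    set a := f y - f x - ⟪z - x, y - x⟫ with ha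
    have ha' : a < 0 := by linarith
    set b := ‖y - x‖ ^ 2 / 2 with hb
    have hb0 : 0 ≤ b := by positivity
    have ht : 0 < min 1 (-a / (2 * (b + 1))) := by
      refine lt_min one_pos (div_pos (by linarith) (by linarith))
    have := key _ ht (min_le_left _ _)
    have h6 : min 1 (-a / (2 * (b + 1))) * b ≤ -a / (2 * (b + 1)) * b :=
      mul_le_mul_of_nonneg_right (min_le_right _ _) hb0
    have h7 : -a / (2 * (b + 1)) * b ≤ -a / 2 := by
      rw [div_mul_eq_mul_div, div_le_div_iff₀ (by linarith) (by norm_num)]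
      nlinarith
    linarith
  choose R hR using this
  exact ⟨R, hR⟩

end Convex

/-! ### Second-order expansions and the Jensen–Alexandrov lemma -/

section Convex2
variable {H : Type*} [NormedAddCommGroup H] [InnerProductSpace ℝ H]

/-- Where the resolvent is differentiable with invertible derivative `B`, every selection of the
subdifferential is differentiable at `R z₀`, with derivative `B⁻¹ - 1`. -/
theorem subgrad_expansion {f : H → ℝ} {R : H → H}
    (hR : ∀ z, IsSubgrad f (R z) (z - R z)) {z₀ : H} {B : H ≃L[ℝ] H}
    (hB : HasFDerivAt R (B : H →L[ℝ] H) z₀) {ε : ℝ} (hε : 0 < ε) :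
    ∃ r > 0, ∀ x p, ‖x - R z₀‖ < r → IsSubgrad f x p →
      ‖p - (z₀ - R z₀) - ((B.symm : H →L[ℝ] H) - 1) (x - R z₀)‖ ≤ ε * ‖x - R z₀‖ := by
  set S : H →L[ℝ] H := (B.symm : H →L[ℝ] H) with hS
  set b : ℝ := ‖S‖ + 1 with hb
  have hb0 : 0 < b := by positivity
  have hBS : ∀ v, ‖v‖ ≤ b * ‖B v‖ := by
    intro v
    have h1 := S.le_opNorm (B v)
    have h2 : S (B v) = v := by simp [hS]
    rw [h2] at h1
    nlinarith [norm_nonneg (B v)]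
  -- `c` bounds `B` from below; `η` is the accuracy needed in the differentiability of `R`.
  set c : ℝ := 1 / b with hc
  have hc0 : 0 < c := by positivity
  set η : ℝ := min (c / 2) (ε * c ^ 2 / (4 * b)) with hη
  have hη0 : 0 < η := by positivity
  have hdiff := (hasFDerivAt_iff_isLittleO.1 hB).def hη0
  obtain ⟨ρ, hρ, hball⟩ := Metric.eventually_nhds_iff.1 hdiff
  -- points at distance exactly `s < ρ` from `z₀` are moved by a definite amount
  have far : ∀ s, 0 < s → s < ρ → ∀ z, s ≤ ‖z - z₀‖ → c ^ 2 / 4 * s ≤ ‖R z - R z₀‖ := by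
    intro s hs hsρ z hz
    set n := ‖z - z₀‖ with hn
    have hn0 : 0 < n := hs.trans_le hz
    set z' := z₀ + (s / n) • (z - z₀) with hz'
    have e1 : z' - z₀ = (s / n) • (z - z₀) := by rw [hz']; abel
    have e2 : ‖z' - z₀‖ = s := by
      rw [e1, norm_smul, Real.norm_of_nonneg (by positivity), ← hn]; field_simp
    have h1 := hball (y := z') (by rw [dist_eq_norm, e2]; exact hsρ)
    rw [e2] at h1
    have h2 := hBS (z' - z₀)
    rw [e2] at h2
    have h3 : c * s ≤ ‖B (z' - z₀)‖ := by
      rw [hc]; rw [div_mul_eq_mul_div, one_mul, div_le_iff₀ hb0]; linarith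
    have h4 : ‖B (z' - z₀)‖ ≤ ‖R z' - R z₀‖ + ‖R z' - R z₀ - B (z' - z₀)‖ := by
      have := norm_sub_le (R z' - R z₀) (R z' - R z₀ - B (z' - z₀))
      simpa using this
    have h5 : c / 2 * s ≤ ‖R z' - R z₀‖ := by
      have : η * s ≤ c / 2 * s := by gcongr; exact min_le_left _ _
      have h1' : ‖R z' - R z₀ - B (z' - z₀)‖ ≤ η * s := h1
      linarith
    have h6 := resolvent_firm hR z' z₀
    have h7 := resolvent_firm hR z z'
    have e3 : z - z' = ((n - s) / n) • (z - z₀) := by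
      rw [hz', show z - (z₀ + (s / n) • (z - z₀)) = (1 - s / n) • (z - z₀) by module]
      congr 1; field_simp
    rw [e1, inner_smul_left] at h6
    rw [e3, inner_smul_left] at h7
    simp only [conj_trivial] at h6 h7
    have h8 : (n - s) / n * ⟪z - z₀, R z - R z'⟫ ≥ 0 := by nlinarith [sq_nonneg ‖R z - R z'‖]
    have h9 : s / n * ⟪z - z₀, R z' - R z₀⟫ ≥ (c / 2 * s) ^ 2 := by
      have : (c / 2 * s) ^ 2 ≤ ‖R z' - R z₀‖ ^ 2 := by gcongr
      linarith
    have h10 : ⟪z - z₀, R z' - R z₀⟫ ≥ c ^ 2 / 4 * s * n := by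
      have : s * ⟪z - z₀, R z' - R z₀⟫ ≥ (c / 2 * s) ^ 2 * n := by
        rw [div_mul_eq_mul_div] at h9
        exact (le_div_iff₀ hn0).1 h9
      have h11 : s * (c ^ 2 / 4 * s * n) ≤ s * ⟪z - z₀, R z' - R z₀⟫ := by nlinarith
      exact le_of_mul_le_mul_left h11 hs
    have h12 : 0 ≤ ⟪z - z₀, R z - R z'⟫ ∨ n = s := by
      rcases hz.eq_or_lt with h | h
      · exact Or.inr h.symm
      · left
        have : 0 < (n - s) / n := div_pos (by linarith) hn0
        exact nonneg_of_mul_nonneg_right h8 this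
    have h13 : ⟪z - z₀, R z - R z₀⟫ ≥ c ^ 2 / 4 * s * n := by
      have e4 : R z - R z₀ = (R z - R z') + (R z' - R z₀) := by abel
      rw [e4, inner_add_right]
      rcases h12 with h | h
      · linarith
      · have : z' = z := by rw [hz', h, div_self hs.ne']; simp
        rw [this] at h10 ⊢
        simpa using h10
    have h14 := real_inner_le_norm (z - z₀) (R z - R z₀)
    rw [← hn] at h14
    have : n * (c ^ 2 / 4 * s) ≤ n * ‖R z - R z₀‖ := by nlinarith
    exact le_of_mul_le_mul_left this hn0
  refine ⟨c ^ 2 / 4 * (ρ / 2), by positivity, fun x p hx hp => ?_⟩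
  set z := x + p with hz
  have hRz : R z = x := resolvent_of_subgrad hR hp
  have hzρ : ‖z - z₀‖ < ρ / 2 := by
    by_contra hcon
    have := far (ρ / 2) (by linarith) (by linarith) z (not_lt.1 hcon)
    rw [hRz] at this
    linarith
  have hzx : c ^ 2 / 4 * ‖z - z₀‖ ≤ ‖x - R z₀‖ := by
    rcases (norm_nonneg (z - z₀)).eq_or_lt with h | h
    · rw [← h]; simp
    · have := far ‖z - z₀‖ h (by linarith) z le_rfl
      rwa [hRz] at this
  have h1 : ‖R z - R z₀ - B (z - z₀)‖ ≤ η * ‖z - z₀‖ :=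
    hball (y := z) (by rw [dist_eq_norm]; linarith)
  rw [hRz] at h1
  have e : p - (z₀ - R z₀) - (S - 1) (x - R z₀) = - S (x - R z₀ - B (z - z₀)) := by
    have : S (B (z - z₀)) = z - z₀ := by simp [hS]
    rw [map_sub S (x - R z₀), this, hz]
    simp only [sub_apply, one_apply_eq_self]
    abel
  rw [e, norm_neg]
  calc ‖S (x - R z₀ - B (z - z₀))‖ ≤ ‖S‖ * ‖x - R z₀ - B (z - z₀)‖ := S.le_opNorm _
    _ ≤ b * (η * ‖z - z₀‖) := by gcongr; rw [hb]; linarith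
    _ ≤ b * (ε * c ^ 2 / (4 * b) * ‖z - z₀‖) := by gcongr; exact min_le_right _ _
    _ = ε * (c ^ 2 / 4 * ‖z - z₀‖) := by field_simp
    _ ≤ ε * ‖x - R z₀‖ := by gcongr

/-- A first-order expansion of the subgradients integrates to a second-order expansion of `f`. -/
theorem second_order_of_subgrad {f : H → ℝ} {g : H → H} (hg : ∀ x, IsSubgrad f x (g x))
    {x₀ p : H} {A : H →L[ℝ] H}
    (hA : ∀ ε > 0, ∃ r > 0, ∀ x, ‖x - x₀‖ < r → ‖g x - p - A (x - x₀)‖ ≤ ε * ‖x - x₀‖)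
    {ε : ℝ} (hε : 0 < ε) :
    ∃ r > 0, ∀ h, ‖h‖ < r → |f (x₀ + h) - f x₀ - ⟪p, h⟫ - ⟪A h, h⟫ / 2| ≤ ε * ‖h‖ ^ 2 := by
  obtain ⟨r, hr, hgr⟩ := hA ε hε
  refine ⟨r, hr, fun h hh => ?_⟩
  have slope : ∀ t, 0 ≤ t → t ≤ 1 →
      |⟪g (x₀ + t • h), h⟫ - ⟪p, h⟫ - t * ⟪A h, h⟫| ≤ ε * ‖h‖ ^ 2 := by
    intro t ht ht1
    have hth : ‖t • h‖ ≤ ‖h‖ := by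
      rw [norm_smul, Real.norm_of_nonneg ht]; nlinarith [norm_nonneg h]
    have h1 := hgr (x₀ + t • h) (by simpa using hth.trans_lt hh)
    rw [add_sub_cancel_left] at h1
    have e : ⟪g (x₀ + t • h), h⟫ - ⟪p, h⟫ - t * ⟪A h, h⟫
        = ⟪g (x₀ + t • h) - p - A (t • h), h⟫ := by
      rw [inner_sub_left, inner_sub_left, map_smul, inner_smul_left]; simp
    rw [e]
    calc _ ≤ ‖g (x₀ + t • h) - p - A (t • h)‖ * ‖h‖ := abs_real_inner_le_norm _ _
      _ ≤ ε * ‖h‖ * ‖h‖ := by gcongr; exact h1.trans (by gcongr)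
      _ = _ := by ring
  set a := ⟪p, h⟫
  set b := ⟪A h, h⟫
  set e := ε * ‖h‖ ^ 2
  have inc : ∀ t s : ℝ, ⟪g (x₀ + t • h), h⟫ * (s - t) ≤ f (x₀ + s • h) - f (x₀ + t • h) := by
    intro t s
    have := hg (x₀ + t • h) (x₀ + s • h)
    rw [show x₀ + s • h - (x₀ + t • h) = (s - t) • h by module, inner_smul_right] at this
    linarith
  have up := telescoping_le (ψ := fun t => f (x₀ + t • h) - t * a - t ^ 2 / 2 * b - t * e)
    (C := |b| / 2) (by
      intro t s ht hts hs
      have h1 := inc s t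
      have h2 := (abs_le.1 (slope s (ht.trans hts) hs)).2
      have h3 : 0 ≤ s - t := by linarith
      have h4 := mul_le_mul_of_nonneg_right h2 h3
      have h5 : b / 2 * (s - t) ^ 2 ≤ |b| / 2 * (s - t) ^ 2 := by gcongr; exact le_abs_self b
      nlinarith)
  have down := telescoping_le (ψ := fun t => -f (x₀ + t • h) + t * a + t ^ 2 / 2 * b - t * e)
    (C := |b| / 2) (by
      intro t s ht hts hs
      have h1 := inc t s
      have h2 := (abs_le.1 (slope t ht (hts.trans hs))).1
      have h3 : 0 ≤ s - t := by linarith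
      have h4 := mul_le_mul_of_nonneg_right h2 h3
      have h5 : b / 2 * (s - t) ^ 2 ≤ |b| / 2 * (s - t) ^ 2 := by gcongr; exact le_abs_self b
      nlinarith)
  simp only [one_smul, zero_smul, add_zero] at up down
  rw [abs_le]
  constructor <;> linarith

/-- Jensen–Alexandrov lemma. Let `f` be convex and let `T` be a test function of class `C^{1,1}` with
gradient `T'`. If `f - T` is smaller by `γ` on the annulus `ρ / 2 ≤ ‖X - X₀‖ ≤ ρ` than at `X₀`, then
for some tilt `P` of size at most `μ` the function `f - T - ⟪P, ·⟫` attains its maximum at a point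
where `f` has a second-order expansion. The contact points of all small tilts form a set whose image
under `X ↦ g X - T' X`, which is Lipschitz on it, contains a ball, so it cannot be a null set. -/
theorem jensen_alexandrov [FiniteDimensional ℝ H] {f : H → ℝ} (hf : Continuous f) {g : H → H}
    (hg : ∀ x, IsSubgrad f x (g x)) {T : H → ℝ} {T' : H → H} {C : ℝ} (hC : 0 ≤ C)
    (hTc : Continuous T)
    (hT : ∀ X Z, T Z - T X - ⟪T' X, Z - X⟫ ≤ C * ‖Z - X‖ ^ 2)
    (hT' : ∀ X Z, ‖T' X - T' Z‖ ≤ C * ‖X - Z‖)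
    {X₀ : H} {ρ γ μ : ℝ} (hρ : 0 < ρ) (hγ : 0 < γ) (hμ : 0 < μ)
    (hgap : ∀ X, ρ / 2 ≤ ‖X - X₀‖ → ‖X - X₀‖ ≤ ρ → f X - T X ≤ f X₀ - T X₀ - γ) :
    ∃ X P, ∃ A : H →L[ℝ] H, ‖X - X₀‖ < ρ / 2 ∧ ‖P‖ ≤ μ ∧
      (∀ Z, ‖Z - X₀‖ ≤ ρ → f Z - T Z - ⟪P, Z⟫ ≤ f X - T X - ⟪P, X⟫) ∧
      IsSubgrad f X (T' X + P) ∧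
      ∀ ε > 0, ∃ r > 0, ∀ h, ‖h‖ < r →
        |f (X + h) - f X - ⟪T' X + P, h⟫ - ⟪A h, h⟫ / 2| ≤ ε * ‖h‖ ^ 2 := by
  let _ : MeasurableSpace H := borel H
  have _ : BorelSpace H := ⟨rfl⟩
  obtain ⟨R, hR⟩ := exists_resolvent hf hg
  set m : Measure H := μH[Module.finrank ℝ H] with hm
  have hRlip := resolvent_lip hR
  -- the perturbation for which `X` is a contact point can only be `g X - T' X`
  set Q : H → H := fun X => g X - T' X with hQ
  set K : Set H := {X | ‖X - X₀‖ < ρ / 2 ∧ ‖Q X‖ ≤ μ ∧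
    ∀ Z, ‖Z - X₀‖ ≤ ρ → f Z - T Z - ⟪Q X, Z⟫ ≤ f X - T X - ⟪Q X, X⟫} with hK
  have hQlip : LipschitzOnWith (Real.toNNReal (9 * C + 4 * μ / ρ)) Q K := by
    refine LipschitzOnWith.of_dist_le_mul fun X hX Y hY => ?_
    rw [Real.coe_toNNReal _ (by positivity), dist_eq_norm, dist_eq_norm]
    set τ := ‖X - Y‖ with hτ
    have hτ0 : 0 ≤ τ := norm_nonneg _
    rcases le_or_gt (ρ / 2) τ with h | h
    · have h1 : ‖Q X - Q Y‖ ≤ 2 * μ := (norm_sub_le _ _).trans (by linarith [hX.2.1, hY.2.1])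
      have h2 : 2 * μ ≤ 4 * μ / ρ * τ := by
        rw [div_mul_eq_mul_div, le_div_iff₀ hρ]; nlinarith
      nlinarith [mul_nonneg hC hτ0]
    · rcases hτ0.eq_or_lt with h0 | h0
      · have : X = Y := sub_eq_zero.1 (norm_eq_zero.1 h0.symm)
        simp [this, ← h0]
      have h1 : ‖g X - g Y‖ ≤ 8 * C * τ := by
        set v := g X - g Y with hv
        rcases (norm_nonneg v).eq_or_lt with hv0 | hv0
        · rw [← hv0]; positivity
        set ν := (τ / ‖v‖) • v with hν
        have hνn : ‖ν‖ = τ := by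
          rw [hν, norm_smul, Real.norm_of_nonneg (by positivity)]; field_simp
        set Z := X + ν with hZ
        have hZρ : ‖Z - X₀‖ ≤ ρ := by
          have := norm_add_le (X - X₀) ν
          rw [show X - X₀ + ν = Z - X₀ by rw [hZ]; abel] at this
          linarith [hX.1]
        have a1 := hg X Z
        have a2 := hg Y X
        have a3 := hY.2.2 Z hZρ
        have a4 := hT Y Z
        rw [show Z - X = ν by rw [hZ]; abel] at a1
        have a5 : ⟪Q Y, Z⟫ - ⟪Q Y, Y⟫ = ⟪g Y, Z - Y⟫ - ⟪T' Y, Z - Y⟫ := by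
          rw [← inner_sub_right, hQ]; simp only [inner_sub_left]
        have a6 : ⟪g Y, Z - Y⟫ = ⟪g Y, ν⟫ + ⟪g Y, X - Y⟫ := by
          rw [← inner_add_right]; congr 1; rw [hZ]; abel
        have a7 : ‖Z - Y‖ ≤ 2 * τ := by
          rw [show Z - Y = (X - Y) + ν by rw [hZ]; abel]
          exact (norm_add_le _ _).trans (by linarith)
        have a8 : C * ‖Z - Y‖ ^ 2 ≤ C * (2 * τ) ^ 2 := by gcongr
        have a9 : ⟪v, ν⟫ ≤ 4 * C * τ ^ 2 := by rw [hv, inner_sub_left]; nlinarith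
        have a10 : ⟪v, ν⟫ = τ * ‖v‖ := by
          rw [hν, inner_smul_right, real_inner_self_eq_norm_sq]; field_simp
        rw [a10] at a9
        have : τ * ‖v‖ ≤ τ * (8 * C * τ) := by nlinarith [mul_nonneg hC (sq_nonneg τ)]
        exact le_of_mul_le_mul_left this h0
      have h2 := hT' X Y
      have h3 : Q X - Q Y = (g X - g Y) - (T' X - T' Y) := by simp only [hQ]; abel
      rw [h3]
      have h4 : 0 ≤ 4 * μ / ρ * τ := by positivity
      calc _ ≤ ‖g X - g Y‖ + ‖T' X - T' Y‖ := norm_sub_le _ _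
        _ ≤ 8 * C * τ + C * τ := add_le_add h1 h2
        _ ≤ _ := by linarith
  -- every small perturbation has a contact point
  set σ := min μ (γ / (2 * ρ)) with hσ
  have hσ0 : 0 < σ := by positivity
  have hcover : ball (0 : H) σ ⊆ Q '' K := by
    intro P hP
    have hP' : ‖P‖ < σ := by simpa using hP
    obtain ⟨X, hXmem, hX⟩ := (ProperSpace.isCompact_closedBall X₀ ρ).exists_isMaxOn
      ⟨X₀, by simpa using hρ.le⟩
      (f := fun Z => f Z - T Z - ⟪P, Z⟫) (by fun_prop)
    have hXρ : ‖X - X₀‖ ≤ ρ := by simpa [dist_eq_norm] using hXmem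
    have hmax : ∀ Z, ‖Z - X₀‖ ≤ ρ → f Z - T Z - ⟪P, Z⟫ ≤ f X - T X - ⟪P, X⟫ := fun Z hZ =>
      hX (by simpa [dist_eq_norm] using hZ)
    have hXhalf : ‖X - X₀‖ < ρ / 2 := by
      by_contra hcon
      have h1 := hgap X (not_lt.1 hcon) hXρ
      have h2 := hmax X₀ (by simpa using hρ.le)
      have h3 : |⟪P, X - X₀⟫| ≤ γ / (2 * ρ) * ρ := (abs_real_inner_le_norm _ _).trans (by
        gcongr; exact hP'.le.trans (min_le_right _ _))
      have h4 : γ / (2 * ρ) * ρ = γ / 2 := by field_simp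
      rw [h4, inner_sub_right] at h3
      have := abs_le.1 h3
      linarith
    have hgX : Q X = P := by
      set v := g X - T' X - P with hv
      have hv0 : ‖v‖ = 0 := by
        by_contra hne
        have hvpos : 0 < ‖v‖ := lt_of_le_of_ne (norm_nonneg _) (Ne.symm hne)
        -- moving from `X` a small distance in the direction `v` contradicts maximality
        set t := min (ρ / (2 * ‖v‖)) (1 / (2 * (C + 1))) with ht
        have ht0 : 0 < t := by positivity
        have b0 : ‖t • v‖ ≤ ρ / 2 := by
          rw [norm_smul, Real.norm_of_nonneg ht0.le]
          calc t * ‖v‖ ≤ ρ / (2 * ‖v‖) * ‖v‖ := by gcongr; exact min_le_left _ _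
            _ = ρ / 2 := by field_simp
        have b1 := hg X (X + t • v)
        have b2 := hmax (X + t • v) (by
          rw [show X + t • v - X₀ = (X - X₀) + t • v by abel]
          exact (norm_add_le _ _).trans (by linarith))
        have b3 := hT X (X + t • v)
        rw [add_sub_cancel_left, inner_smul_right] at b1
        rw [add_sub_cancel_left, inner_smul_right, norm_smul, Real.norm_of_nonneg ht0.le] at b3
        rw [inner_add_right, inner_smul_right] at b2
        have b4 : ⟪g X, v⟫ - ⟪T' X, v⟫ - ⟪P, v⟫ = ‖v‖ ^ 2 := by
          rw [← inner_sub_left, ← inner_sub_left, ← hv, real_inner_self_eq_norm_sq]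
        have b5 : t * ‖v‖ ^ 2 ≤ C * (t * ‖v‖) ^ 2 := by rw [← b4]; linarith
        have b6 : C * t ≤ 1 / 2 := by
          calc C * t ≤ C * (1 / (2 * (C + 1))) := by gcongr; exact min_le_right _ _
            _ ≤ 1 / 2 := by
              rw [mul_one_div, div_le_div_iff₀ (by positivity) (by norm_num)]; linarith
        have b7 : 0 < t * ‖v‖ ^ 2 := by positivity
        nlinarith
      have := norm_eq_zero.1 hv0
      rw [hv, sub_eq_zero] at this
      exact this
    exact ⟨X, ⟨hXhalf, by rw [hgX]; exact hP'.le.trans (min_le_left _ _), by rwa [hgX]⟩, hgX⟩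
  -- `f` has a second-order expansion at `R z` unless `z ∈ N₁ ∪ N₂`, and `R` maps both sets to null sets
  set N₁ : Set H := {z | ¬ DifferentiableAt ℝ R z} with hN₁
  set N₂ : Set H := {z | DifferentiableAt ℝ R z ∧ (fderiv ℝ R z).det = 0} with hN₂
  have null₁ : m (R '' N₁) = 0 := by
    have h1 : m N₁ = 0 := hRlip.ae_differentiableAt (μ := m)
    have h2 := (hRlip.lipschitzOnWith (s := N₁)).hausdorffMeasure_image_le
      (d := (Module.finrank ℝ H : ℝ)) (by positivity)
    rw [← hm, h1, mul_zero] at h2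
    exact le_antisymm h2 bot_le
  have null₂ : m (R '' N₂) = 0 :=
    addHaar_image_eq_zero_of_det_fderivWithin_eq_zero m
      (fun z hz => hz.1.hasFDerivAt.hasFDerivWithinAt) (fun z hz => hz.2)
  have hex : ∃ X ∈ K, X ∉ R '' N₁ ∪ R '' N₂ := by
    by_contra hcon
    push Not at hcon
    have h1 : m K = 0 := measure_mono_null (fun X hX => hcon X hX) (measure_union_null null₁ null₂)
    have h2 := hQlip.hausdorffMeasure_image_le (d := (Module.finrank ℝ H : ℝ)) (by positivity)
    rw [← hm, h1, mul_zero] at h2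
    have h3 : 0 < m (ball (0 : H) σ) := measure_ball_pos m 0 hσ0
    exact absurd ((measure_mono hcover).trans h2) (not_le.2 h3)
  obtain ⟨X, hXK, hXN⟩ := hex
  have hz : R (X + g X) = X := resolvent_of_subgrad hR (hg X)
  have hd : DifferentiableAt ℝ R (X + g X) := by
    by_contra hcon
    exact hXN (Or.inl ⟨_, hcon, hz⟩)
  have hdet : (fderiv ℝ R (X + g X)).det ≠ 0 := fun hcon => hXN (Or.inr ⟨_, ⟨hd, hcon⟩, hz⟩)
  set B := (fderiv ℝ R (X + g X)).toContinuousLinearEquivOfDetNeZero hdet with hB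
  have hBd : HasFDerivAt R (B : H →L[ℝ] H) (X + g X) := by
    have := hd.hasFDerivAt
    rwa [hB, ContinuousLinearMap.coe_toContinuousLinearEquivOfDetNeZero]
  have hsum : T' X + Q X = g X := by simp only [hQ]; abel
  refine ⟨X, Q X, (B.symm : H →L[ℝ] H) - 1, hXK.1, hXK.2.1, hXK.2.2, by rw [hsum]; exact hg X, ?_⟩
  rw [hsum]
  intro ε hε
  refine second_order_of_subgrad hg (fun ε' hε' => ?_) hε
  obtain ⟨r, hr, h⟩ := subgrad_expansion hR hBd hε'
  refine ⟨r, hr, fun x hx => ?_⟩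
  have := h x (g x) (by rwa [hz]) (hg x)
  rw [hz] at this
  simpa using this
end Convex2

/-! ### Quadratic forms and uniformly elliptic operators -/

section Quadratic
variable {d : ℕ}

/-- The quadratic form `⟪M x, x⟫` of a matrix. -/
def qf (M : Mat d) (x : Euc d) : ℝ := ⟪Matrix.toEuclideanCLM (𝕜 := ℝ) M x, x⟫

theorem qf_add (M N : Mat d) (x : Euc d) : qf (M + N) x = qf M x + qf N x := by
  simp [qf, inner_add_left]

theorem qf_neg (M : Mat d) (x : Euc d) : qf (-M) x = -qf M x := by
  simp [qf]

theorem qf_sub (M N : Mat d) (x : Euc d) : qf (M - N) x = qf M x - qf N x := by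
  simp [qf, inner_sub_left]

theorem qf_smul (c : ℝ) (M : Mat d) (x : Euc d) : qf (c • M) x = c * qf M x := by
  simp [qf, inner_smul_left]

theorem qf_smul_one (c : ℝ) (x : Euc d) : qf (c • (1 : Mat d)) x = c * ‖x‖ ^ 2 := by
  simp [qf, inner_smul_left]

theorem qf_arg_smul (M : Mat d) (c : ℝ) (x : Euc d) : qf M (c • x) = c ^ 2 * qf M x := by
  simp [qf, inner_smul_left, inner_smul_right]; ring

theorem qf_zero_arg (M : Mat d) : qf M 0 = 0 := by simp [qf]

theorem qf_continuous (M : Mat d) : Continuous (qf M) := by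
  unfold qf; fun_prop

theorem abs_qf_le (M : Mat d) (x : Euc d) : |qf M x| ≤ matOpNorm M * ‖x‖ ^ 2 := by
  have h := abs_real_inner_le_norm (Matrix.toEuclideanCLM (𝕜 := ℝ) M x) x
  have h2 := (Matrix.toEuclideanCLM (𝕜 := ℝ) M).le_opNorm x
  calc _ ≤ _ := h
    _ ≤ (‖Matrix.toEuclideanCLM (𝕜 := ℝ) M‖ * ‖x‖) * ‖x‖ := by gcongr
    _ = _ := by rw [matOpNorm]; ring

theorem inner_toE_symm {M : Mat d} (hM : M.IsHermitian) (x y : Euc d) :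
    ⟪Matrix.toEuclideanCLM (𝕜 := ℝ) M x, y⟫ = ⟪Matrix.toEuclideanCLM (𝕜 := ℝ) M y, x⟫ := by
  rw [real_inner_comm, Matrix.inner_toEuclideanCLM, real_inner_comm, Matrix.inner_toEuclideanCLM]
  have hT : M.transpose = M := by
    have := hM.eq
    rwa [Matrix.conjTranspose_eq_transpose_of_trivial] at this
  rw [Matrix.dotProduct_mulVec, ← Matrix.mulVec_transpose, hT, dotProduct_comm]

theorem qf_sum {M : Mat d} (hM : M.IsHermitian) (x y : Euc d) :
    qf M (x + y) = qf M x + 2 * ⟪Matrix.toEuclideanCLM (𝕜 := ℝ) M x, y⟫ + qf M y := by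
  simp only [qf, map_add, inner_add_left, inner_add_right]
  rw [inner_toE_symm hM y x]; ring

theorem posSemidef_of_qf {M : Mat d} (hM : M.IsHermitian) (h : ∀ x, 0 ≤ qf M x) :
    M.PosSemidef := by
  rw [Matrix.posSemidef_iff_dotProduct_mulVec]
  refine ⟨hM, fun x => ?_⟩
  have := h (WithLp.toLp 2 x)
  rw [qf, real_inner_comm, Matrix.inner_toEuclideanCLM] at this
  simpa using this

theorem isHermitian_smul_one (c : ℝ) : (c • (1 : Mat d)).IsHermitian := by
  have h1 : (1 : Mat d).IsHermitian := Matrix.isHermitian_one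
  rw [Matrix.IsHermitian, Matrix.conjTranspose_smul, h1.eq]; simp

theorem matOpNorm_smul_one_le {c : ℝ} (hc : 0 ≤ c) : matOpNorm (c • (1 : Mat d)) ≤ c := by
  rw [matOpNorm, map_smul, map_one, norm_smul, Real.norm_of_nonneg hc]
  have := ContinuousLinearMap.norm_id_le (𝕜 := ℝ) (E := Euc d)
  have h2 : ‖(1 : Euc d →L[ℝ] Euc d)‖ ≤ 1 := this
  nlinarith

theorem matOpNorm_nonneg (M : Mat d) : 0 ≤ matOpNorm M := norm_nonneg _

end Quadratic

section Elliptic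
variable {d : ℕ} {lam Lam : ℝ} {F : Mat d → ℝ}

theorem UniformlyElliptic.mono (hF : UniformlyElliptic lam Lam F) (hlam : 0 < lam) {M N : Mat d}
    (hM : M.IsHermitian) (hN : N.PosSemidef) : F M ≤ F (M + N) := by
  have := (hF.2 M N hM hN).1
  nlinarith [matOpNorm_nonneg N]

theorem UniformlyElliptic.add_smul_one_le (hF : UniformlyElliptic lam Lam F) (hLam : 0 ≤ Lam)
    {M : Mat d} (hM : M.IsHermitian) {c : ℝ} (hc : 0 ≤ c) : F (M + c • 1) ≤ F M + Lam * c := by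
  have h1 := (hF.2 M (c • 1) hM (posSemidef_of_qf (isHermitian_smul_one c) fun x => by
    rw [qf_smul_one]; positivity)).2
  have h2 := mul_le_mul_of_nonneg_left (matOpNorm_smul_one_le (d := d) hc) hLam
  linarith

theorem UniformlyElliptic.abs_le (hF : UniformlyElliptic lam Lam F) (hlam : 0 < lam)
    (hLam : 0 ≤ Lam) {M : Mat d} (hM : M.IsHermitian) : |F M| ≤ 3 * Lam * matOpNorm M := by
  set k := matOpNorm M with hk
  have hk0 : 0 ≤ k := matOpNorm_nonneg M
  have hP : (M + k • 1).PosSemidef := posSemidef_of_qf (hM.add (isHermitian_smul_one k)) fun x => by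
    rw [qf_add, qf_smul_one]
    have := neg_le_of_abs_le (abs_qf_le M x)
    linarith
  have h1 := hF.2 0 (M + k • 1) Matrix.isHermitian_zero hP
  rw [zero_add, hF.1, sub_zero] at h1
  have h2 := hF.add_smul_one_le hLam hM hk0
  have h3 := hF.mono hlam hM (N := k • 1) (posSemidef_of_qf (isHermitian_smul_one k) fun x => by
    rw [qf_smul_one]; positivity)
  have h4 : matOpNorm (M + k • 1) ≤ 2 * k := by
    have := norm_add_le (Matrix.toEuclideanCLM (𝕜 := ℝ) M) (Matrix.toEuclideanCLM (𝕜 := ℝ) (k • (1 : Mat d)))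
    rw [← map_add] at this
    have h5 := matOpNorm_smul_one_le (d := d) hk0
    simp only [matOpNorm] at *
    linarith
  have h5 : 0 ≤ lam * matOpNorm (M + k • 1) := mul_nonneg hlam.le (matOpNorm_nonneg _)
  have h6 := mul_le_mul_of_nonneg_left h4 hLam
  have h7 : 0 ≤ Lam * k := by positivity
  rw [_root_.abs_le]
  constructor <;> linarith

theorem UniformlyElliptic.reflect (hF : UniformlyElliptic lam Lam F) :
    UniformlyElliptic lam Lam (fun M => -F (-M)) := by
  refine ⟨by simp [hF.1], fun M N hM hN => ?_⟩
  have := hF.2 (-(M + N)) N (hM.add hN.1).neg hN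
  rw [show -(M + N) + N = -M by abel] at this
  constructor <;> linarith [this.1, this.2]

end Elliptic

/-! ### Quadratic test functions -/

section Touch
variable {d : ℕ}

/-- `u` is touched from above at `x` by the quadratic polynomial with gradient `p` and
Hessian `M`. -/
def TouchA (u : Euc d → ℝ) (x p : Euc d) (M : Mat d) : Prop :=
  ∀ᶠ y in 𝓝 x, u y ≤ u x + ⟪p, y - x⟫ + qf M (y - x) / 2

/-- `G(D²u) ≥ 0` on `s`, tested with quadratic polynomials only. -/
def QSub (G : Mat d → ℝ) (u : Euc d → ℝ) (s : Set (Euc d)) : Prop :=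
  ∀ x ∈ s, ∀ p M, M.IsHermitian → TouchA u x p M → 0 ≤ G M

/-- The quadratic polynomial with gradient `p` and Hessian `M` at `x`. -/
def quad (x p : Euc d) (M : Mat d) (y : Euc d) : ℝ := ⟪p, y - x⟫ + qf M (y - x) / 2

theorem clm_sub_hasFDerivAt (L : Euc d →L[ℝ] Euc d) (x y : Euc d) :
    HasFDerivAt (fun z => L (z - x)) L y := by
  have h1 : HasFDerivAt (fun z : Euc d => z - x) (ContinuousLinearMap.id ℝ (Euc d)) y :=
    (hasFDerivAt_id y).sub_const x
  exact L.hasFDerivAt.comp y h1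

theorem quad_hasFDerivAt (x p : Euc d) {M : Mat d} (hM : M.IsHermitian) (y : Euc d) :
    HasFDerivAt (quad x p M)
      (innerSL ℝ (p + Matrix.toEuclideanCLM (𝕜 := ℝ) M (y - x))) y := by
  have h1 : HasFDerivAt (fun z : Euc d => z - x) (ContinuousLinearMap.id ℝ (Euc d)) y :=
    (hasFDerivAt_id y).sub_const x
  have h2 : HasFDerivAt (fun z : Euc d => Matrix.toEuclideanCLM (𝕜 := ℝ) M (z - x))
      (Matrix.toEuclideanCLM (𝕜 := ℝ) M) y :=
    clm_sub_hasFDerivAt (Matrix.toEuclideanCLM (𝕜 := ℝ) M) x y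
  have h3 := h2.inner ℝ h1
  have h4 := ((innerSL ℝ p).hasFDerivAt (x := y - x)).comp y h1
  have h5 := h4.add (h3.mul_const (2⁻¹ : ℝ))
  refine (h5.congr_of_eventuallyEq (Eventually.of_forall fun z => ?_)).congr_fderiv ?_
  · simp [quad, qf, div_eq_mul_inv]
  · ext v
    simp only [add_apply, ContinuousLinearMap.comp_apply,
      smul_apply, innerSL_apply_apply, fderivInnerCLM_apply,
      ContinuousLinearMap.prod_apply, inner_add_left, ContinuousLinearMap.id_apply, smul_eq_mul]
    rw [inner_toE_symm hM v (y - x)]; ring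

theorem quad_contDiff (x p : Euc d) (M : Mat d) : ContDiff ℝ 2 (quad x p M) := by
  have h1 : ContDiff ℝ 2 fun y : Euc d => y - x := contDiff_id.sub contDiff_const
  have h2 : ContDiff ℝ 2 fun y : Euc d => Matrix.toEuclideanCLM (𝕜 := ℝ) M (y - x) :=
    (Matrix.toEuclideanCLM (𝕜 := ℝ) M).contDiff.comp h1
  exact (contDiff_const.inner ℝ h1).add ((h2.inner ℝ h1).div_const 2)

theorem quad_gradient (x p : Euc d) {M : Mat d} (hM : M.IsHermitian) (y : Euc d) :
    gradient (quad x p M) y = p + Matrix.toEuclideanCLM (𝕜 := ℝ) M (y - x) := by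
  refine HasGradientAt.gradient ?_
  rw [hasGradientAt_iff_hasFDerivAt]
  exact quad_hasFDerivAt x p hM y

theorem inner_single_toE (M : Mat d) (i j : Fin d) :
    ⟪Matrix.toEuclideanCLM (𝕜 := ℝ) M (EuclideanSpace.single i 1), EuclideanSpace.single j 1⟫
      = M j i := by
  rw [real_inner_comm, Matrix.inner_toEuclideanCLM]
  simp

theorem quad_hess (x p : Euc d) {M : Mat d} (hM : M.IsHermitian) (y : Euc d) :
    hessM (quad x p M) y = M := by
  ext i j
  have h1 : fderiv ℝ (quad x p M)
      = fun y => innerSL ℝ (p + Matrix.toEuclideanCLM (𝕜 := ℝ) M (y - x)) := by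
    funext z; exact (quad_hasFDerivAt x p hM z).fderiv
  have h2 : HasFDerivAt (fun y => innerSL ℝ (p + Matrix.toEuclideanCLM (𝕜 := ℝ) M (y - x)))
      ((innerSL ℝ : Euc d →L[ℝ] Euc d →L[ℝ] ℝ).comp (Matrix.toEuclideanCLM (𝕜 := ℝ) M)) y := by
    have h2 : HasFDerivAt (fun z : Euc d => Matrix.toEuclideanCLM (𝕜 := ℝ) M (z - x))
        (Matrix.toEuclideanCLM (𝕜 := ℝ) M) y :=
      clm_sub_hasFDerivAt (Matrix.toEuclideanCLM (𝕜 := ℝ) M) x y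
    exact ((innerSL ℝ : Euc d →L[ℝ] Euc d →L[ℝ] ℝ).hasFDerivAt).comp y (h2.const_add p)
  rw [hessM, Matrix.of_apply, iteratedFDeriv_two_apply, h1, h2.fderiv]
  simp only [Matrix.cons_val_zero, Matrix.cons_val_one, ContinuousLinearMap.comp_apply,
    innerSL_apply_apply]
  rw [inner_single_toE]
  have := hM.apply i j
  simpa using this

theorem TouchA.isLocalMax {u : Euc d → ℝ} {x p : Euc d} {M : Mat d} (h : TouchA u x p M) :
    IsLocalMax (fun y => u y - quad x p M y) x := by
  filter_upwards [h] with y hy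
  simp only [quad, sub_self, qf_zero_arg, inner_zero_right]
  linarith

/-- The viscosity inequality, tested with a quadratic polynomial. -/
theorem touch_sub {F : Mat d → ℝ} {θ f : Euc d → ℝ} {q : Euc d} {u : Euc d → ℝ}
    (hu : ViscSubSol F θ f q u) {x p : Euc d} {M : Mat d} (hx : x ∈ ball (0 : Euc d) 1)
    (hM : M.IsHermitian) (h : TouchA u x p M) (hq : q + p ≠ 0) :
    f x ≤ ‖q + p‖ ^ (θ x) * F M := by
  have hg : gradient (quad x p M) x = p := by rw [quad_gradient x p hM]; simp
  have := hu x hx (quad x p M) (quad_contDiff x p M).contDiffAt h.isLocalMax (by rwa [hg])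
  rwa [hg, quad_hess x p hM] at this

theorem hessM_neg (φ : Euc d → ℝ) (x : Euc d) : hessM (fun y => -φ y) x = -hessM φ x := by
  ext i j
  simp only [hessM, Matrix.of_apply, Matrix.neg_apply]
  have : iteratedFDeriv ℝ 2 (-φ) x = -iteratedFDeriv ℝ 2 φ x := iteratedFDeriv_neg_apply
  rw [show (fun y => -φ y) = -φ from rfl, this]
  rfl

theorem gradient_neg' (φ : Euc d → ℝ) (x : Euc d) : gradient (fun y => -φ y) x = -gradient φ x := by
  simp only [gradient]
  rw [show (fun y => -φ y) = -φ from rfl, fderiv_neg, map_neg]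

theorem ViscSuperSol.reflect {F : Mat d → ℝ} {θ f : Euc d → ℝ} {q : Euc d} {u : Euc d → ℝ}
    (hu : ViscSuperSol F θ f q u) :
    ViscSubSol (fun M => -F (-M)) θ (fun x => -f x) (-q) (fun x => -u x) := by
  intro x hx φ hφ hmax hq
  have h1 : -q + gradient φ x = -(q + gradient (fun y => -φ y) x) := by
    rw [gradient_neg']; abel
  have := hu x hx (fun y => -φ y) hφ.neg (by
    filter_upwards [hmax] with y hy
    linarith) (fun h => hq (by rw [h1, h, neg_zero]))
  rw [h1, norm_neg]
  rw [hessM_neg] at this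
  linarith

/-- Second-order Taylor expansion, as an upper bound up to `μ ‖y - x‖ ^ 2`. -/
theorem taylor_touch {φ : Euc d → ℝ} {x : Euc d} (hφ : ContDiffAt ℝ 2 φ x) :
    (hessM φ x).IsHermitian ∧
    ∀ μ > 0, ∀ᶠ y in 𝓝 x, φ y ≤ φ x + ⟪gradient φ x, y - x⟫ + qf (hessM φ x) (y - x) / 2
      + μ * ‖y - x‖ ^ 2 := by
  have hsymm : IsSymmSndFDerivAt ℝ φ x := hφ.isSymmSndFDerivAt (by simp)
  set D := fderiv ℝ (fderiv ℝ φ) x with hD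
  have hDs : ∀ v w, D v w = D w v := fun v w => hsymm.eq v w
  have hent : ∀ i j, hessM φ x i j = D (EuclideanSpace.single i 1) (EuclideanSpace.single j 1) := by
    intro i j
    rw [hessM, Matrix.of_apply, iteratedFDeriv_two_apply]; rfl
  have hqf : ∀ v : Euc d, qf (hessM φ x) v = D v v := by
    intro v
    have hv : v = ∑ i, v i • (EuclideanSpace.single i (1 : ℝ)) := by
      have := (EuclideanSpace.basisFun (Fin d) ℝ).sum_repr v
      simpa using this.symm
    have e1 : D v v = ∑ i, ∑ j, v i * (v j * hessM φ x i j) := by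
      conv_lhs => rw [hv]
      simp only [map_sum, map_smul, sum_apply, smul_apply,
        smul_eq_mul, hent, Finset.mul_sum]
      exact Finset.sum_congr rfl fun i _ => Finset.sum_congr rfl fun j _ => by rw [hDs]
    rw [e1, qf, real_inner_comm, Matrix.inner_toEuclideanCLM]
    simp only [dotProduct, Matrix.mulVec, Finset.mul_sum]
    refine Finset.sum_congr rfl fun i _ => Finset.sum_congr rfl fun j _ => ?_
    ring
  refine ⟨?_, ?_⟩
  · ext i j
    rw [Matrix.conjTranspose_apply, hent, hent, hDs]; rfl
  intro μ hμ
  have hev : ∀ᶠ y in 𝓝 x, DifferentiableAt ℝ φ y := by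
    have := (hφ.of_le (m := 1) (by norm_num)).eventually (by simp)
    filter_upwards [this] with y hy using hy.differentiableAt (by simp)
  have hDd : HasFDerivAt (fderiv ℝ φ) D x :=
    ((hφ.fderiv_right (m := 1) (by norm_num)).differentiableAt (by simp)).hasFDerivAt
  have hlit := (hasFDerivAt_iff_isLittleO.1 hDd).def hμ
  obtain ⟨r, hr, hball⟩ := Metric.eventually_nhds_iff.1 (hev.and hlit)
  refine Metric.eventually_nhds_iff.2 ⟨r, hr, fun y hy => ?_⟩
  -- the remainder, whose derivative at `z` is `Dφ z - Dφ x - D (z - x)`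
  set g : Euc d → ℝ := fun z => φ z - fderiv ℝ φ x (z - x) - D (z - x) (z - x) * 2⁻¹ with hg
  have hgd : ∀ z ∈ closedBall x ‖y - x‖, HasFDerivWithinAt g
      (fderiv ℝ φ z - fderiv ℝ φ x - D (z - x)) (closedBall x ‖y - x‖) z := by
    intro z hz
    have hz' : dist z x < r := lt_of_le_of_lt (by simpa using hz) (by rwa [dist_eq_norm] at hy)
    have h1 : HasFDerivAt (fun z : Euc d => z - x) (ContinuousLinearMap.id ℝ (Euc d)) z :=
      (hasFDerivAt_id z).sub_const x
    have h2 := (fderiv ℝ φ x).hasFDerivAt.comp z h1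
    have h3 := (D.hasFDerivAt.comp z h1).clm_apply h1
    have h4 := ((hball hz').1.hasFDerivAt.sub h2).sub (h3.mul_const (2⁻¹ : ℝ))
    refine (h4.congr_fderiv ?_).hasFDerivWithinAt
    ext v
    simp
    rw [hDs v z, hDs v x]
    ring
  have hmv := (convex_closedBall x ‖y - x‖).norm_image_sub_le_of_norm_hasFDerivWithin_le
    (f := g) (C := μ * ‖y - x‖) (x := x) (y := y) hgd (fun z hz => by
      have hz0 : ‖z - x‖ ≤ ‖y - x‖ := by simpa [dist_eq_norm] using hz
      have hz' : dist z x < r := lt_of_le_of_lt (by simpa using hz) (by rwa [dist_eq_norm] at hy)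
      exact (hball hz').2.trans (by gcongr))
    (by simp) (by simp [dist_eq_norm])
  rw [Real.norm_eq_abs] at hmv
  have := (abs_le.1 hmv).2
  simp only [hg, sub_self, map_zero] at this
  have hgr : ⟪gradient φ x, y - x⟫ = fderiv ℝ φ x (y - x) := by
    simp [gradient]
  rw [hqf, hgr]
  simp only [zero_mul, sub_zero] at this
  nlinarith

/-- Testing with quadratic polynomials suffices: a `C²` test function is replaced by its Taylor
polynomial, with the Hessian increased by `2μ`. -/
theorem QSub.pure {lam Lam : ℝ} {G : Mat d → ℝ} (hLam : 0 < Lam)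
    (hG : UniformlyElliptic lam Lam G) {u : Euc d → ℝ} {s : Set (Euc d)} (h : QSub G u s) :
    ViscSubSolPure G (fun _ => (0 : ℝ)) u s := by
  intro x hx φ hφ hmax
  obtain ⟨hH, hT⟩ := taylor_touch hφ
  refine le_of_forall_pos_le_add fun ε hε => ?_
  set μ := ε / (2 * Lam) with hμ
  have hμ0 : 0 < μ := by positivity
  have h1 := h x hx (gradient φ x) (hessM φ x + (2 * μ) • 1) (hH.add (isHermitian_smul_one _)) (by
    filter_upwards [hT μ hμ0, hmax] with y h1 h2
    rw [qf_add, qf_smul_one]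
    linarith)
  have h2 := hG.add_smul_one_le hLam.le hH (c := 2 * μ) (by positivity)
  have : Lam * (2 * μ) = ε := by rw [hμ]; field_simp
  linarith

theorem QSub.pure_super {lam Lam : ℝ} {G : Mat d → ℝ} (hLam : 0 < Lam)
    (hG : UniformlyElliptic lam Lam G) {u : Euc d → ℝ} {s : Set (Euc d)}
    (h : QSub (fun M => -G (-M)) (fun x => -u x) s) :
    ViscSuperSolPure G (fun _ => (0 : ℝ)) u s := by
  intro x hx φ hφ hmin
  have := h.pure hLam hG.reflect x hx (fun y => -φ y) hφ.neg (by
    filter_upwards [hmin] with y hy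
    linarith)
  rw [hessM_neg, neg_neg] at this
  linarith

end Touch

/-! ### Sup-convolutions -/

section SupConv

/-- Sup-convolution `x ↦ sup_{y ∈ B} (u y - ‖x - y‖² / (2η))`, shifted by `‖x‖² / (2η)` so as to be
convex; `Y x` is a maximizer. -/
theorem exists_supconv {E : Type*} [NormedAddCommGroup E] [InnerProductSpace ℝ E]
    {B : Set E} (hB : IsCompact B) (hne : B.Nonempty) {u : E → ℝ}
    (hu : ContinuousOn u B) {η : ℝ} (hη : 0 < η) :
    ∃ (f : E → ℝ) (Y : E → E), Continuous f ∧ (∀ x, Y x ∈ B) ∧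
      (∀ x, f x = u (Y x) - ‖Y x‖ ^ 2 / (2 * η) + η⁻¹ * ⟪x, Y x⟫) ∧
      (∀ x, ∀ y ∈ B, u y - ‖y‖ ^ 2 / (2 * η) + η⁻¹ * ⟪x, y⟫ ≤ f x) ∧
      (∀ x, IsSubgrad f x (η⁻¹ • Y x)) := by
  have h1 : ∀ x : E, ∃ y ∈ B, ∀ z ∈ B, u z - ‖z‖ ^ 2 / (2 * η) + η⁻¹ * ⟪x, z⟫
      ≤ u y - ‖y‖ ^ 2 / (2 * η) + η⁻¹ * ⟪x, y⟫ := by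
    intro x
    obtain ⟨y, hy, hmax⟩ := hB.exists_isMaxOn hne
      (f := fun z => u z - ‖z‖ ^ 2 / (2 * η) + η⁻¹ * ⟪x, z⟫) (by fun_prop)
    exact ⟨y, hy, fun z hz => hmax hz⟩
  choose Y hYB hY using h1
  set f : E → ℝ := fun x => u (Y x) - ‖Y x‖ ^ 2 / (2 * η) + η⁻¹ * ⟪x, Y x⟫ with hf
  have hsub : ∀ x, IsSubgrad f x (η⁻¹ • Y x) := by
    intro x z
    have := hY z (Y x) (hYB x)
    rw [inner_smul_left, inner_sub_right, real_inner_comm z (Y x), real_inner_comm x (Y x)]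
    simp only [conj_trivial, hf] at this ⊢
    linarith
  refine ⟨f, Y, ?_, hYB, fun x => rfl, fun x y hy => hY x y hy, hsub⟩
  obtain ⟨R, hR⟩ := hB.isBounded.exists_norm_le
  have key : ∀ x z, f x - f z ≤ (η⁻¹ * R) * ‖x - z‖ := by
    intro x z
    have h1 := hsub x z
    have h2 : ⟪η⁻¹ • Y x, x - z⟫ ≤ ‖η⁻¹ • Y x‖ * ‖x - z‖ := real_inner_le_norm _ _
    rw [norm_smul, Real.norm_of_nonneg (by positivity)] at h2
    have h3 : η⁻¹ * ‖Y x‖ * ‖x - z‖ ≤ η⁻¹ * R * ‖x - z‖ := by gcongr; exact hR _ (hYB x)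
    rw [← neg_sub x z, inner_neg_right] at h1
    linarith
  have hR0 : 0 ≤ R := (norm_nonneg _).trans (hR _ (hYB 0))
  refine (LipschitzWith.of_dist_le_mul (K := Real.toNNReal (η⁻¹ * R)) fun x z => ?_).continuous
  rw [Real.coe_toNNReal _ (by positivity), Real.dist_eq, dist_eq_norm, abs_le]
  constructor
  · have := key z x
    rw [norm_sub_rev] at this
    linarith
  · exact key x z

/-- Closeness of the sup-convolution to `u`, and of the maximizer to the base point. -/
theorem supconv_close {E : Type*} [NormedAddCommGroup E] [InnerProductSpace ℝ E]
    {B : Set E} {u f : E → ℝ} {Y : E → E} {η δ γ : ℝ} (hη : 0 < η) (hδ : 0 < δ)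
    (hηδ : 4 * η < δ ^ 2) (hb : ∀ x ∈ B, |u x| ≤ 1) (hYB : ∀ x, Y x ∈ B)
    (hf : ∀ x, f x = u (Y x) - ‖Y x‖ ^ 2 / (2 * η) + η⁻¹ * ⟪x, Y x⟫)
    (hge : ∀ x, ∀ y ∈ B, u y - ‖y‖ ^ 2 / (2 * η) + η⁻¹ * ⟪x, y⟫ ≤ f x)
    (huc : ∀ x ∈ B, ∀ y ∈ B, ‖x - y‖ < δ → u y ≤ u x + γ) {x : E} (hx : x ∈ B) :
    ‖x - Y x‖ < δ ∧ u x ≤ f x - ‖x‖ ^ 2 / (2 * η) ∧ f x - ‖x‖ ^ 2 / (2 * η) ≤ u x + γ := by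
  have h1 := hge x x hx
  rw [real_inner_self_eq_norm_sq] at h1
  have e1 : f x - ‖x‖ ^ 2 / (2 * η) = u (Y x) - ‖x - Y x‖ ^ 2 / (2 * η) := by
    rw [hf, norm_sub_sq_real]; field_simp; ring
  have e2 : u x ≤ f x - ‖x‖ ^ 2 / (2 * η) := by
    have : u x - ‖x‖ ^ 2 / (2 * η) + η⁻¹ * ‖x‖ ^ 2 = u x + ‖x‖ ^ 2 / (2 * η) := by
      field_simp; ring
    linarith
  have h2 := abs_le.1 (hb x hx)
  have h3 := abs_le.1 (hb _ (hYB x))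
  have h4 : ‖x - Y x‖ ^ 2 / (2 * η) ≤ 2 := by linarith
  have h5 : ‖x - Y x‖ ^ 2 < δ ^ 2 := by
    rw [div_le_iff₀ (by positivity)] at h4; linarith
  have h6 : ‖x - Y x‖ < δ := lt_of_pow_lt_pow_left₀ 2 hδ.le h5
  refine ⟨h6, e2, ?_⟩
  have h7 := huc x hx _ (hYB x) h6
  have h8 : 0 ≤ ‖x - Y x‖ ^ 2 / (2 * η) := by positivity
  linarith

/-- Increments of `u` at the maximizer are dominated by increments of the sup-convolution. -/
theorem supconv_transfer {E : Type*} [NormedAddCommGroup E] [InnerProductSpace ℝ E]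
    {B : Set E} {u f : E → ℝ} {Y : E → E} {η : ℝ} (hη : 0 < η)
    (hf : ∀ x, f x = u (Y x) - ‖Y x‖ ^ 2 / (2 * η) + η⁻¹ * ⟪x, Y x⟫)
    (hge : ∀ x, ∀ y ∈ B, u y - ‖y‖ ^ 2 / (2 * η) + η⁻¹ * ⟪x, y⟫ ≤ f x) {x h : E}
    (hB : Y x + h ∈ B) :
    u (Y x + h) - u (Y x) ≤ f (x + h) - f x - η⁻¹ * ⟪x, h⟫ - ‖h‖ ^ 2 / (2 * η) := by
  have h1 := hge (x + h) _ hB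
  rw [norm_add_sq_real, inner_add_left, inner_add_right, inner_add_right, real_inner_comm (Y x) h,
    real_inner_self_eq_norm_sq] at h1
  rw [hf x]
  have e : (‖Y x‖ ^ 2 + 2 * ⟪Y x, h⟫ + ‖h‖ ^ 2) / (2 * η)
      = ‖Y x‖ ^ 2 / (2 * η) + η⁻¹ * ⟪Y x, h⟫ + ‖h‖ ^ 2 / (2 * η) := by field_simp
  have e2 : η⁻¹ * ‖h‖ ^ 2 = 2 * (‖h‖ ^ 2 / (2 * η)) := by field_simp
  rw [e] at h1
  linarith

end SupConv

/-! ### The doubled space and the theorem on sums -/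

section Sums
variable {d : ℕ}

/-- Only the symmetric part of an operator enters its quadratic form. -/
theorem exists_sym_matrix (L : Euc d →L[ℝ] Euc d) :
    ∃ M : Mat d, M.IsHermitian ∧ ∀ x, qf M x = ⟪L x, x⟫ := by
  set N : Mat d := (Matrix.toEuclideanCLM (𝕜 := ℝ)).symm L with hN
  have hL : Matrix.toEuclideanCLM (𝕜 := ℝ) N = L := by rw [hN]; simp
  refine ⟨(2⁻¹ : ℝ) • (N + N.conjTranspose), ?_, fun x => ?_⟩
  · rw [Matrix.IsHermitian, Matrix.conjTranspose_smul, Matrix.conjTranspose_add,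
      Matrix.conjTranspose_conjTranspose, add_comm]; simp
  · have h2 : qf N.conjTranspose x = qf N x := by
      rw [qf, qf, ← Matrix.star_eq_conjTranspose, map_star, ContinuousLinearMap.star_eq_adjoint,
        ContinuousLinearMap.adjoint_inner_left, real_inner_comm]
    rw [qf_smul, qf_add, h2, qf, hL]; ring

/-- The doubled space `ℝᵈ × ℝᵈ` with its Euclidean structure. -/
abbrev Dbl (d : ℕ) := WithLp 2 (Euc d × Euc d)

/-- Pairing into the doubled space. -/
abbrev pr (x y : Euc d) : Dbl d := WithLp.toLp 2 (x, y)

theorem dbl_inner (X Z : Dbl d) : ⟪X, Z⟫ = ⟪X.fst, Z.fst⟫ + ⟪X.snd, Z.snd⟫ :=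
  WithLp.prod_inner_apply X Z

theorem dbl_norm_sq (X : Dbl d) : ‖X‖ ^ 2 = ‖X.fst‖ ^ 2 + ‖X.snd‖ ^ 2 :=
  WithLp.prod_norm_sq_eq_of_L2 X

theorem dbl_fst_le (X : Dbl d) : ‖X.fst‖ ≤ ‖X‖ := by
  have := dbl_norm_sq X
  exact le_of_sq_le_sq (by nlinarith [sq_nonneg ‖X.snd‖]) (norm_nonneg _)

theorem dbl_snd_le (X : Dbl d) : ‖X.snd‖ ≤ ‖X‖ := by
  have := dbl_norm_sq X
  exact le_of_sq_le_sq (by nlinarith [sq_nonneg ‖X.fst‖]) (norm_nonneg _)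

/-- First inclusion `ξ ↦ (ξ, 0)`. -/
def inlD (d : ℕ) : Euc d →L[ℝ] Dbl d :=
  ((WithLp.prodContinuousLinearEquiv 2 ℝ (Euc d) (Euc d)).symm :
    Euc d × Euc d →L[ℝ] Dbl d).comp (ContinuousLinearMap.inl ℝ (Euc d) (Euc d))

/-- Second inclusion `ζ ↦ (0, ζ)`. -/
def inrD (d : ℕ) : Euc d →L[ℝ] Dbl d :=
  ((WithLp.prodContinuousLinearEquiv 2 ℝ (Euc d) (Euc d)).symm :
    Euc d × Euc d →L[ℝ] Dbl d).comp (ContinuousLinearMap.inr ℝ (Euc d) (Euc d))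

theorem inlD_apply (ξ : Euc d) : inlD d ξ = pr ξ 0 := rfl
theorem inrD_apply (ξ : Euc d) : inrD d ξ = pr 0 ξ := rfl

end Sums

section Sums2
variable {d : ℕ}

theorem exists_unifCont {E : Type*} [NormedAddCommGroup E] {B : Set E} (hB : IsCompact B)
    {u : E → ℝ} (hu : ContinuousOn u B) {γ : ℝ} (hγ : 0 < γ) :
    ∃ δ > 0, ∀ x ∈ B, ∀ y ∈ B, ‖x - y‖ < δ → u y ≤ u x + γ := by
  obtain ⟨δ, hδ, h⟩ := Metric.uniformContinuousOn_iff.1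
    (hB.uniformContinuousOn_of_continuous hu) γ hγ
  refine ⟨δ, hδ, fun x hx y hy hxy => ?_⟩
  have := h x hx y hy (by rwa [dist_eq_norm])
  rw [Real.dist_eq, abs_lt] at this
  linarith

set_option maxHeartbeats 800000 in
/-- Approximate theorem on sums. If `u x + v y` minus a quadratic polynomial with Hessian `S` has a
strict maximum at `(x₀, y₀)`, then at nearby points `u` and `v` are touched from above by quadratic
polynomials whose slopes are `μ`-close to the gradient `b + S X` of that polynomial at a point `X`
near `(x₀, y₀)`, and whose Hessians satisfy `M₁ ⊕ M₂ ≤ S + μ`. The Jensen–Alexandrov lemma is applied to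
the sup-convolutions of `u` and `v`, and the expansions are transferred back to `u` and `v`. -/
theorem sums_lemma {u v : Euc d → ℝ} {x₀ y₀ : Euc d} {ρ : ℝ} (hρ : 0 < ρ)
    (hu : ContinuousOn u (closedBall x₀ ρ)) (hv : ContinuousOn v (closedBall y₀ ρ))
    (hub : ∀ x ∈ closedBall x₀ ρ, |u x| ≤ 1) (hvb : ∀ x ∈ closedBall y₀ ρ, |v x| ≤ 1)
    (S : Dbl d →L[ℝ] Dbl d) (hS : ∀ X Z, ⟪S X, Z⟫ = ⟪S Z, X⟫) (b : Dbl d) {ν : ℝ} (hν : 0 < ν)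
    (hmax : ∀ X : Dbl d, X.fst ∈ closedBall x₀ ρ → X.snd ∈ closedBall y₀ ρ →
      u X.fst + v X.snd - (⟪b, X⟫ + ⟪S X, X⟫ / 2) + ν * ‖X - pr x₀ y₀‖ ^ 2
        ≤ u x₀ + v y₀ - (⟪b, pr x₀ y₀⟫ + ⟪S (pr x₀ y₀), pr x₀ y₀⟫ / 2))
    {μ : ℝ} (hμ : 0 < μ) :
    ∃ x ∈ ball x₀ ρ, ∃ y ∈ ball y₀ ρ, ∃ X P : Dbl d, ∃ M₁ M₂ : Mat d,
      ‖X - pr x₀ y₀‖ ≤ μ ∧ ‖P‖ ≤ μ ∧ M₁.IsHermitian ∧ M₂.IsHermitian ∧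
      TouchA u x (b + S X + P).fst M₁ ∧ TouchA v y (b + S X + P).snd M₂ ∧
      ∀ h : Dbl d, qf M₁ h.fst + qf M₂ h.snd ≤ ⟪S h, h⟫ + μ * ‖h‖ ^ 2 := by
  set X₀ : Dbl d := pr x₀ y₀ with hX₀
  have hcB₁ : IsCompact (closedBall x₀ ρ) := isCompact_closedBall x₀ ρ
  have hcB₂ : IsCompact (closedBall y₀ ρ) := isCompact_closedBall y₀ ρ
  set ρ₁ := min (ρ / 2) μ with hρ₁
  have hρ₁0 : 0 < ρ₁ := by positivity
  have hρ₁ρ : ρ₁ ≤ ρ / 2 := min_le_left _ _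
  set γ := ν * ρ₁ ^ 2 / 16 with hγ
  have hγ0 : 0 < γ := by positivity
  obtain ⟨δ₁, hδ₁, huc⟩ := exists_unifCont hcB₁ hu hγ0
  obtain ⟨δ₂, hδ₂, hvc⟩ := exists_unifCont hcB₂ hv hγ0
  set δ := min (ρ / 2) (min δ₁ δ₂) with hδ
  have hδ0 : 0 < δ := by positivity
  have hδρ : δ ≤ ρ / 2 := min_le_left _ _
  set η := δ ^ 2 / 8 with hη
  have hη0 : 0 < η := by positivity
  have hηδ : 4 * η < δ ^ 2 := by rw [hη]; nlinarith [sq_pos_of_pos hδ0]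
  obtain ⟨f₁, Y₁, hf₁c, hY₁, hf₁, hge₁, hsub₁⟩ :=
    exists_supconv hcB₁ ⟨x₀, by simpa using hρ.le⟩ hu hη0
  obtain ⟨f₂, Y₂, hf₂c, hY₂, hf₂, hge₂, hsub₂⟩ :=
    exists_supconv hcB₂ ⟨y₀, by simpa using hρ.le⟩ hv hη0
  have close₁ : ∀ {x : Euc d}, x ∈ closedBall x₀ ρ → _ := fun {x} hx =>
    supconv_close (x := x) hη0 hδ0 hηδ hub hY₁ hf₁ hge₁
      (fun x hx y hy hxy => huc x hx y hy
        (hxy.trans_le ((min_le_right _ _).trans (min_le_left _ _)))) hx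
  have close₂ : ∀ {x : Euc d}, x ∈ closedBall y₀ ρ → _ := fun {x} hx =>
    supconv_close (x := x) hη0 hδ0 hηδ hvb hY₂ hf₂ hge₂
      (fun x hx y hy hxy => hvc x hx y hy
        (hxy.trans_le ((min_le_right _ _).trans (min_le_right _ _)))) hx
  set f : Dbl d → ℝ := fun X => f₁ X.fst + f₂ X.snd with hf
  have hfst : Continuous (fun X : Dbl d => X.fst) := by fun_prop
  have hsnd : Continuous (fun X : Dbl d => X.snd) := by fun_prop
  have hfc : Continuous f := (hf₁c.comp hfst).add (hf₂c.comp hsnd)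
  set g : Dbl d → Dbl d := fun X => pr (η⁻¹ • Y₁ X.fst) (η⁻¹ • Y₂ X.snd) with hg
  have hgs : ∀ X, IsSubgrad f X (g X) := by
    intro X Z
    have a1 := hsub₁ X.fst Z.fst
    have a2 := hsub₂ X.snd Z.snd
    rw [dbl_inner]
    simp only [hf, hg, WithLp.sub_fst, WithLp.sub_snd]
    simp only [WithLp.fst, WithLp.snd] at *
    linarith
  set T : Dbl d → ℝ := fun X => ⟪b, X⟫ + ⟪S X, X⟫ / 2 + ‖X‖ ^ 2 / (2 * η) with hT
  set T' : Dbl d → Dbl d := fun X => b + S X + η⁻¹ • X with hT'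
  have hTexp : ∀ X h, T (X + h) - T X = ⟪T' X, h⟫ + (⟪S h, h⟫ / 2 + ‖h‖ ^ 2 / (2 * η)) := by
    intro X h
    simp only [hT, hT', map_add, inner_add_left, inner_add_right, norm_add_sq_real,
      inner_smul_left, conj_trivial]
    rw [hS h X]
    field_simp
    ring
  set C := ‖S‖ + η⁻¹ with hC
  have hTup : ∀ X Z, T Z - T X - ⟪T' X, Z - X⟫ ≤ C * ‖Z - X‖ ^ 2 := by
    intro X Z
    have h1 := hTexp X (Z - X)
    rw [add_sub_cancel] at h1
    have h2 : ⟪S (Z - X), Z - X⟫ ≤ ‖S‖ * ‖Z - X‖ ^ 2 := by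
      refine (real_inner_le_norm _ _).trans ?_
      rw [pow_two, ← mul_assoc]; gcongr; exact S.le_opNorm _
    have h3 : ‖Z - X‖ ^ 2 / (2 * η) = η⁻¹ * ‖Z - X‖ ^ 2 / 2 := by field_simp
    have h4 : 0 ≤ ‖S‖ * ‖Z - X‖ ^ 2 := by positivity
    have h5 : 0 ≤ η⁻¹ * ‖Z - X‖ ^ 2 := by positivity
    rw [hC, add_mul]; linarith
  have hTlip : ∀ X Z, ‖T' X - T' Z‖ ≤ C * ‖X - Z‖ := by
    intro X Z
    have : T' X - T' Z = S (X - Z) + η⁻¹ • (X - Z) := by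
      simp only [hT', map_sub, smul_sub]; abel
    rw [this, hC, add_mul]
    refine (norm_add_le _ _).trans (add_le_add (S.le_opNorm _) ?_)
    rw [norm_smul, Real.norm_of_nonneg (by positivity)]
  have hTc : Continuous T := by
    simp only [hT]; fun_prop
  have hfT : ∀ X, f X - T X = (f₁ X.fst - ‖X.fst‖ ^ 2 / (2 * η)) + (f₂ X.snd - ‖X.snd‖ ^ 2 / (2 * η))
      - (⟪b, X⟫ + ⟪S X, X⟫ / 2) := by
    intro X
    simp only [hf, hT, dbl_norm_sq X]; ring
  have hin : ∀ X : Dbl d, ‖X - X₀‖ ≤ ρ₁ → ‖X.fst - x₀‖ ≤ ρ₁ ∧ ‖X.snd - y₀‖ ≤ ρ₁ := fun X hX =>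
    ⟨(dbl_fst_le (X - X₀)).trans hX, (dbl_snd_le (X - X₀)).trans hX⟩
  have hx₀B : x₀ ∈ closedBall x₀ ρ := by simpa using hρ.le
  have hy₀B : y₀ ∈ closedBall y₀ ρ := by simpa using hρ.le
  have hgap : ∀ X, ρ₁ / 2 ≤ ‖X - X₀‖ → ‖X - X₀‖ ≤ ρ₁ → f X - T X ≤ f X₀ - T X₀ - γ := by
    intro X h1 h2
    obtain ⟨h3, h4⟩ := hin X h2
    have h3' : X.fst ∈ closedBall x₀ ρ := by rw [mem_closedBall, dist_eq_norm]; linarith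
    have h4' : X.snd ∈ closedBall y₀ ρ := by rw [mem_closedBall, dist_eq_norm]; linarith
    have a1 := (close₁ h3').2.2
    have a2 := (close₂ h4').2.2
    have a3 := (close₁ hx₀B).2.1
    have a4 := (close₂ hy₀B).2.1
    have a5 := hmax X h3' h4'
    have a6 : ν * (ρ₁ / 2) ^ 2 ≤ ν * ‖X - X₀‖ ^ 2 := by gcongr
    have a7 : f X₀ - T X₀ = (f₁ x₀ - ‖x₀‖ ^ 2 / (2 * η)) + (f₂ y₀ - ‖y₀‖ ^ 2 / (2 * η))
      - (⟪b, X₀⟫ + ⟪S X₀, X₀⟫ / 2) := hfT X₀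
    rw [hfT X, a7]
    have a8 : ν * (ρ₁ / 2) ^ 2 = 4 * γ := by rw [hγ]; ring
    linarith
  obtain ⟨X, P, A, hX1, hP, hXmax, -, hA⟩ := jensen_alexandrov hfc hgs
    (by positivity : 0 ≤ C) hTc hTup hTlip hρ₁0 hγ0 hμ hgap
  obtain ⟨hXa, hXb⟩ := hin X (by linarith)
  obtain ⟨r, hr, hexp⟩ := hA (μ / 4) (by positivity)
  set x := X.fst with hx
  set y := X.snd with hy
  have hxB : x ∈ closedBall x₀ ρ := by rw [mem_closedBall, dist_eq_norm]; linarith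
  have hyB : y ∈ closedBall y₀ ρ := by rw [mem_closedBall, dist_eq_norm]; linarith
  have hXa' : ‖x - x₀‖ ≤ ρ₁ / 2 := (dbl_fst_le (X - X₀)).trans hX1.le
  have hXb' : ‖y - y₀‖ ≤ ρ₁ / 2 := (dbl_snd_le (X - X₀)).trans hX1.le
  have hYx : ‖Y₁ x - x₀‖ < ρ := by
    have h1 := (close₁ hxB).1
    have h2 := norm_sub_le (x - x₀) (x - Y₁ x)
    rw [show x - x₀ - (x - Y₁ x) = Y₁ x - x₀ by abel] at h2
    linarith
  have hYy : ‖Y₂ y - y₀‖ < ρ := by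
    have h1 := (close₂ hyB).1
    have h2 := norm_sub_le (y - y₀) (y - Y₂ y)
    rw [show y - y₀ - (y - Y₂ y) = Y₂ y - y₀ by abel] at h2
    linarith
  obtain ⟨N₁, hN₁, hN₁q⟩ := exists_sym_matrix ((inlD d).adjoint ∘L (A ∘L inlD d))
  obtain ⟨N₂, hN₂, hN₂q⟩ := exists_sym_matrix ((inrD d).adjoint ∘L (A ∘L inrD d))
  set c := μ / 2 - η⁻¹ with hc
  have q₁ : ∀ ξ, qf (N₁ + c • 1) ξ = ⟪A (inlD d ξ), inlD d ξ⟫ + c * ‖ξ‖ ^ 2 := fun ξ => by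
    rw [qf_add, qf_smul_one, hN₁q]
    simp [ContinuousLinearMap.adjoint_inner_left]
  have q₂ : ∀ ξ, qf (N₂ + c • 1) ξ = ⟪A (inrD d ξ), inrD d ξ⟫ + c * ‖ξ‖ ^ 2 := fun ξ => by
    rw [qf_add, qf_smul_one, hN₂q]
    simp [ContinuousLinearMap.adjoint_inner_left]
  set p : Dbl d := T' X + P with hp
  have exp₁ : ∀ ξ : Euc d, ‖ξ‖ < r →
      |f₁ (x + ξ) - f₁ x - ⟪p.fst, ξ⟫ - ⟪A (inlD d ξ), inlD d ξ⟫ / 2| ≤ μ / 4 * ‖ξ‖ ^ 2 := by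
    intro ξ hξ
    have hn : ‖inlD d ξ‖ ^ 2 = ‖ξ‖ ^ 2 := by
      rw [dbl_norm_sq, inlD_apply]; simp
    have hn' : ‖inlD d ξ‖ = ‖ξ‖ := by
      exact (sq_eq_sq₀ (norm_nonneg _) (norm_nonneg _)).1 hn
    have h1 := hexp (inlD d ξ) (by rwa [hn'])
    rw [hn, dbl_inner] at h1
    have e1 : f (X + inlD d ξ) - f X = f₁ (x + ξ) - f₁ x := by
      simp [hf, inlD_apply, hx]
    have e2 : ⟪p.fst, (inlD d ξ).fst⟫ + ⟪p.snd, (inlD d ξ).snd⟫ = ⟪p.fst, ξ⟫ := by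
      simp [inlD_apply]
    rw [e1, e2] at h1
    exact h1
  have exp₂ : ∀ ξ : Euc d, ‖ξ‖ < r →
      |f₂ (y + ξ) - f₂ y - ⟪p.snd, ξ⟫ - ⟪A (inrD d ξ), inrD d ξ⟫ / 2| ≤ μ / 4 * ‖ξ‖ ^ 2 := by
    intro ξ hξ
    have hn : ‖inrD d ξ‖ ^ 2 = ‖ξ‖ ^ 2 := by
      rw [dbl_norm_sq, inrD_apply]; simp
    have hn' : ‖inrD d ξ‖ = ‖ξ‖ := by
      exact (sq_eq_sq₀ (norm_nonneg _) (norm_nonneg _)).1 hn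
    have h1 := hexp (inrD d ξ) (by rwa [hn'])
    rw [hn, dbl_inner] at h1
    have e1 : f (X + inrD d ξ) - f X = f₂ (y + ξ) - f₂ y := by
      simp [hf, inrD_apply, hy]
    have e2 : ⟪p.fst, (inrD d ξ).fst⟫ + ⟪p.snd, (inrD d ξ).snd⟫ = ⟪p.snd, ξ⟫ := by
      simp [inrD_apply]
    rw [e1, e2] at h1
    exact h1
  have hp₁ : ∀ ξ : Euc d, ⟪p.fst, ξ⟫ = ⟪(b + S X + P).fst, ξ⟫ + η⁻¹ * ⟪x, ξ⟫ := fun ξ => by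
    simp only [hp, hT', WithLp.add_fst, WithLp.smul_fst, inner_add_left, inner_smul_left, hx,
      conj_trivial]; ring
  have hp₂ : ∀ ξ : Euc d, ⟪p.snd, ξ⟫ = ⟪(b + S X + P).snd, ξ⟫ + η⁻¹ * ⟪y, ξ⟫ := fun ξ => by
    simp only [hp, hT', WithLp.add_snd, WithLp.smul_snd, inner_add_left, inner_smul_left, hy,
      conj_trivial]; ring
  have hη2 : ∀ s : ℝ, s / (2 * η) = η⁻¹ * s / 2 := fun s => by field_simp
  refine ⟨Y₁ x, by rwa [mem_ball, dist_eq_norm], Y₂ y, by rwa [mem_ball, dist_eq_norm], X, P,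
    N₁ + c • 1, N₂ + c • 1, ?_, hP, hN₁.add (isHermitian_smul_one c),
    hN₂.add (isHermitian_smul_one c), ?_, ?_, ?_⟩
  · have := min_le_right (ρ / 2) μ
    linarith
  · refine Metric.eventually_nhds_iff.2 ⟨min r (ρ - ‖Y₁ x - x₀‖), lt_min hr (by linarith),
      fun z hz => ?_⟩
    rw [dist_eq_norm, lt_min_iff] at hz
    have hzB : Y₁ x + (z - Y₁ x) ∈ closedBall x₀ ρ := by
      rw [mem_closedBall, dist_eq_norm]
      have := norm_add_le (z - Y₁ x) (Y₁ x - x₀)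
      rw [show z - Y₁ x + (Y₁ x - x₀) = Y₁ x + (z - Y₁ x) - x₀ by abel] at this
      linarith [hz.2]
    have a1 := supconv_transfer hη0 hf₁ hge₁ hzB
    have a2 := (abs_le.1 (exp₁ _ hz.1)).2
    rw [add_sub_cancel] at a1
    rw [hp₁] at a2
    rw [hη2] at a1
    rw [q₁, hc]
    linarith
  · refine Metric.eventually_nhds_iff.2 ⟨min r (ρ - ‖Y₂ y - y₀‖), lt_min hr (by linarith),
      fun z hz => ?_⟩
    rw [dist_eq_norm, lt_min_iff] at hz
    have hzB : Y₂ y + (z - Y₂ y) ∈ closedBall y₀ ρ := by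
      rw [mem_closedBall, dist_eq_norm]
      have := norm_add_le (z - Y₂ y) (Y₂ y - y₀)
      rw [show z - Y₂ y + (Y₂ y - y₀) = Y₂ y + (z - Y₂ y) - y₀ by abel] at this
      linarith [hz.2]
    have a1 := supconv_transfer hη0 hf₂ hge₂ hzB
    have a2 := (abs_le.1 (exp₂ _ hz.1)).2
    rw [add_sub_cancel] at a1
    rw [hp₂] at a2
    rw [hη2] at a1
    rw [q₂, hc]
    linarith
  · intro h
    -- test the maximum at `X` along the direction `h`, rescaled to a small `k = t • h`
    obtain ⟨t, ht, htr, htρ⟩ : ∃ t : ℝ, 0 < t ∧ ‖t • h‖ < r ∧ ‖t • h‖ ≤ ρ₁ / 2 := by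
      refine ⟨min (r / 2) (ρ₁ / 2) / (‖h‖ + 1), by positivity, ?_⟩
      have : ‖(min (r / 2) (ρ₁ / 2) / (‖h‖ + 1)) • h‖ ≤ min (r / 2) (ρ₁ / 2) := by
        rw [norm_smul, Real.norm_of_nonneg (by positivity), div_mul_eq_mul_div,
          div_le_iff₀ (by positivity)]
        gcongr; linarith
      exact ⟨this.trans_lt ((min_le_left _ _).trans_lt (by linarith)), this.trans (min_le_right _ _)⟩
    set k := t • h with hk
    have a0 := hXmax (X + k) (by
      have := norm_add_le (X - X₀) k
      rw [show X - X₀ + k = X + k - X₀ by abel] at this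
      linarith)
    have a1 := hTexp X k
    have a2 := (abs_le.1 (exp₁ k.fst ((dbl_fst_le k).trans_lt htr))).1
    have a3 := (abs_le.1 (exp₂ k.snd ((dbl_snd_le k).trans_lt htr))).1
    have a4 : f (X + k) - f X = (f₁ (x + k.fst) - f₁ x) + (f₂ (y + k.snd) - f₂ y) := by
      simp only [hf, WithLp.add_fst, WithLp.add_snd, hx, hy]; ring
    have a5 : ⟪p.fst, k.fst⟫ + ⟪p.snd, k.snd⟫ = ⟪T' X, k⟫ + ⟪P, k⟫ := by
      rw [← dbl_inner, hp, inner_add_left]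
    rw [inner_add_right] at a0
    rw [hη2] at a1
    have a6 := dbl_norm_sq k
    have key : qf (N₁ + c • 1) k.fst + qf (N₂ + c • 1) k.snd ≤ ⟪S k, k⟫ + μ * ‖k‖ ^ 2 := by
      rw [q₁, q₂, hc]
      rw [a6] at a1 ⊢
      linarith
    have e1 : k.fst = t • h.fst := by simp [hk]
    have e2 : k.snd = t • h.snd := by simp [hk]
    rw [e1, e2, qf_arg_smul, qf_arg_smul, hk, map_smul, inner_smul_left, inner_smul_right, norm_smul,
      Real.norm_of_nonneg ht.le] at key
    simp only [conj_trivial] at key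
    have : t ^ 2 * (qf (N₁ + c • 1) h.fst + qf (N₂ + c • 1) h.snd)
        ≤ t ^ 2 * (⟪S h, h⟫ + μ * ‖h‖ ^ 2) := by linarith
    exact le_of_mul_le_mul_left this (by positivity)

end Sums2

/-! ### The doubling argument of Ishii and Lions -/

section IshiiLions
variable {d : ℕ}

/-- The antidiagonal inclusion `w ↦ (w, -w)`; its adjoint is `(x, y) ↦ x - y`. -/
def antiD (d : ℕ) : Euc d →L[ℝ] Dbl d := inlD d - inrD d

theorem antiD_fst (w : Euc d) : (antiD d w).fst = w := by
  simp [antiD, inlD_apply, inrD_apply]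

theorem antiD_snd (w : Euc d) : (antiD d w).snd = -w := by
  simp [antiD, inlD_apply, inrD_apply]

theorem antiD_adjoint (X : Dbl d) : (antiD d).adjoint X = X.fst - X.snd := by
  refine ext_inner_right ℝ fun w => ?_
  rw [ContinuousLinearMap.adjoint_inner_left, dbl_inner, antiD_fst, antiD_snd, inner_sub_left,
    inner_neg_right, sub_eq_add_neg]

/-- The operator `z ↦ a z - c ⟪e, z⟫ e`, a rank-one perturbation of a multiple of the identity. -/
def rankOne (a c : ℝ) (e : Euc d) : Euc d →L[ℝ] Euc d :=
  a • ContinuousLinearMap.id ℝ (Euc d) - c • (innerSL ℝ e).smulRight e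

theorem rankOne_apply (a c : ℝ) (e z : Euc d) : rankOne a c e z = a • z - (c * ⟪e, z⟫) • e := by
  simp [rankOne, smul_smul]

theorem rankOne_inner (a c : ℝ) (e z w : Euc d) :
    ⟪rankOne a c e z, w⟫ = a * ⟪z, w⟫ - c * ⟪e, z⟫ * ⟪e, w⟫ := by
  rw [rankOne_apply, inner_sub_left, inner_smul_left, inner_smul_left]; simp

/-- The operator with quadratic form `⟪W (x - y), x - y⟫ + c (‖x‖² + ‖y‖²)`: the Hessian of a doubled
test function that depends on `x - y` and carries a quadratic penalization. -/
def hessD (W : Euc d →L[ℝ] Euc d) (c : ℝ) : Dbl d →L[ℝ] Dbl d :=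
  antiD d ∘L (W ∘L (antiD d).adjoint) + c • ContinuousLinearMap.id ℝ (Dbl d)

theorem hessD_apply (W : Euc d →L[ℝ] Euc d) (c : ℝ) (X : Dbl d) :
    hessD W c X = antiD d (W (X.fst - X.snd)) + c • X := by
  simp [hessD, antiD_adjoint]

theorem hessD_inner (W : Euc d →L[ℝ] Euc d) (c : ℝ) (X Z : Dbl d) :
    ⟪hessD W c X, Z⟫ = ⟪W (X.fst - X.snd), Z.fst - Z.snd⟫ + c * ⟪X, Z⟫ := by
  rw [hessD_apply, inner_add_left, inner_smul_left, dbl_inner, antiD_fst, antiD_snd,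
    inner_sub_right, inner_neg_left]
  simp; ring

/-- `‖z‖` is dominated near `s • e` by a quadratic polynomial that agrees with it at `s • e`. -/
theorem norm_le_quadratic {z e : Euc d} {s : ℝ} (hs : 0 < s) (he : ‖e‖ = 1)
    (hz : s / 2 ≤ ⟪e, z⟫) : ‖z‖ ≤ ⟪e, z⟫ + (‖z‖ ^ 2 - ⟪e, z⟫ ^ 2) / s := by
  have h1 : ⟪e, z⟫ ≤ ‖z‖ := by
    have := real_inner_le_norm e z
    rwa [he, one_mul] at this
  have h2 : ‖z‖ - ⟪e, z⟫ ≤ (‖z‖ ^ 2 - ⟪e, z⟫ ^ 2) / s := by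
    rw [le_div_iff₀ hs]; nlinarith
  linarith

set_option maxHeartbeats 1000000 in
/-- Lipschitz bound for functions whose viscosity inequalities are only available for slopes comparable
to `N`. If it failed, `u x - u y - N (‖x - y‖ - ‖x - y‖²)` with a quadratic penalization would have a
positive interior maximum. The modulus is strictly concave in the direction `e` of `x - y`, so the
Hessians given by the theorem on sums satisfy `M₁ + M₂ ≤ C` in all directions and `≤ C - 8 N`
in the direction `e`. Ellipticity then contradicts `F M₁ ≥ -1` and `F (-M₂) ≤ 1` for large `N`. -/
theorem ishii_lions {lam Lam : ℝ} (hlam : 0 < lam) (hLam : 0 ≤ Lam) {F : Mat d → ℝ}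
    (hF : UniformlyElliptic lam Lam F) {u : Euc d → ℝ} (huc : ContinuousOn u (ball 0 1))
    (hub : ∀ x ∈ ball (0 : Euc d) 1, |u x| ≤ 1) {N : ℝ} (hN : 600 ≤ N)
    (hNL : 2 + Lam * 16390 < 8 * lam * N)
    (hsub : ∀ x ∈ ball (0 : Euc d) 1, ∀ p M, M.IsHermitian → TouchA u x p M →
      N / 4 ≤ ‖p‖ → ‖p‖ ≤ 4 * N → -1 ≤ F M)
    (hsup : ∀ x ∈ ball (0 : Euc d) 1, ∀ p M, M.IsHermitian → TouchA (fun x => -u x) x p M →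
      N / 4 ≤ ‖p‖ → ‖p‖ ≤ 4 * N → -1 ≤ -F (-M))
    {x₀ y : Euc d} (hx₀ : ‖x₀‖ ≤ 15 / 16) (hy : ‖y - x₀‖ ≤ 1 / 32) :
    u x₀ - u y ≤ (N + 128) * ‖x₀ - y‖ := by
  set B := closedBall x₀ (1 / 32 : ℝ) with hB
  have hBball : B ⊆ ball 0 1 := by
    intro z hz
    rw [hB, mem_closedBall, dist_eq_norm] at hz
    rw [mem_ball_zero_iff]
    have := norm_add_le (z - x₀) x₀
    rw [sub_add_cancel] at this
    linarith
  have hBc : IsCompact B := isCompact_closedBall _ _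
  have huB : ContinuousOn u B := huc.mono hBball
  set Ψ : Euc d × Euc d → ℝ := fun q => u q.1 - u q.2 - N * (‖q.1 - q.2‖ - ‖q.1 - q.2‖ ^ 2)
    - 4096 * (‖q.1 - x₀‖ ^ 2 + ‖q.2 - x₀‖ ^ 2) with hΨ
  have hΨc : ContinuousOn Ψ (B ×ˢ B) := by
    have h1 : ContinuousOn (fun q : Euc d × Euc d => u q.1) (B ×ˢ B) :=
      huB.comp continuousOn_fst fun q hq => hq.1
    have h2 : ContinuousOn (fun q : Euc d × Euc d => u q.2) (B ×ˢ B) :=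
      huB.comp continuousOn_snd fun q hq => hq.2
    exact ((h1.sub h2).sub (Continuous.continuousOn (by fun_prop))).sub
      (Continuous.continuousOn (by fun_prop))
  have hx₀B : x₀ ∈ B := by simp [hB]
  have hyB : y ∈ B := by rw [hB, mem_closedBall, dist_eq_norm]; exact hy
  suffices hmain : ∀ q ∈ B ×ˢ B, Ψ q ≤ 0 by
    have h1 := hmain (x₀, y) ⟨hx₀B, hyB⟩
    simp only [hΨ, sub_self, norm_zero] at h1
    rw [norm_sub_rev x₀ y] at h1 ⊢
    have : 0 ≤ ‖y - x₀‖ := norm_nonneg _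
    nlinarith [mul_nonneg (by linarith : 0 ≤ N) (sq_nonneg ‖y - x₀‖)]
  obtain ⟨⟨x₁, y₁⟩, ⟨hx₁, hy₁⟩, hmax⟩ := (hBc.prod hBc).exists_isMaxOn ⟨(x₀, x₀), hx₀B, hx₀B⟩ hΨc
  intro q hq
  refine (hmax hq).trans ?_
  simp only at hx₁ hy₁
  by_contra hpos
  replace hpos : 0 < Ψ (x₁, y₁) := not_le.1 hpos
  have hx₁' : ‖x₁ - x₀‖ ≤ 1 / 32 := by rwa [hB, mem_closedBall, dist_eq_norm] at hx₁
  have hy₁' : ‖y₁ - x₀‖ ≤ 1 / 32 := by rwa [hB, mem_closedBall, dist_eq_norm] at hy₁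
  set s := ‖x₁ - y₁‖ with hs
  have hs16 : s ≤ 1 / 16 := by
    have := norm_sub_le (x₁ - x₀) (y₁ - x₀)
    rw [sub_sub_sub_cancel_right] at this
    linarith
  have hs0 : 0 < s := by
    rcases (norm_nonneg (x₁ - y₁)).eq_or_lt with h | h
    · have hxy : x₁ = y₁ := sub_eq_zero.1 (norm_eq_zero.1 h.symm)
      have : 0 ≤ ‖y₁ - x₀‖ ^ 2 := by positivity
      simp only [hΨ, hxy, sub_self, norm_zero] at hpos
      nlinarith
    · exact h
  have hΨ₁ : Ψ (x₁, y₁) = u x₁ - u y₁ - N * (s - s ^ 2)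
    - 4096 * (‖x₁ - x₀‖ ^ 2 + ‖y₁ - x₀‖ ^ 2) := rfl
  have hub₁ := abs_le.1 (hub x₁ (hBball hx₁))
  have hub₂ := abs_le.1 (hub y₁ (hBball hy₁))
  have hNs : 0 ≤ N * (s - s ^ 2) := mul_nonneg (by linarith) (by nlinarith)
  -- the penalization forces the maximum point into the interior
  have hin : 4096 * (‖x₁ - x₀‖ ^ 2 + ‖y₁ - x₀‖ ^ 2) < 2 := by rw [hΨ₁] at hpos; linarith
  have hx₁i : ‖x₁ - x₀‖ < 1 / 32 := by
    refine lt_of_pow_lt_pow_left₀ 2 (by norm_num) ?_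
    nlinarith [sq_nonneg ‖y₁ - x₀‖]
  have hy₁i : ‖y₁ - x₀‖ < 1 / 32 := by
    refine lt_of_pow_lt_pow_left₀ 2 (by norm_num) ?_
    nlinarith [sq_nonneg ‖x₁ - x₀‖]
  set ρ := min (s / 8) (min (1 / 32 - ‖x₁ - x₀‖) (1 / 32 - ‖y₁ - x₀‖)) with hρ
  have hρ0 : 0 < ρ := lt_min (by linarith) (lt_min (by linarith) (by linarith))
  have hρs : ρ ≤ s / 8 := min_le_left _ _
  have hρx : closedBall x₁ ρ ⊆ B := by
    refine closedBall_subset_closedBall' ?_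
    rw [dist_eq_norm]
    have := (min_le_right (s / 8) (min (1 / 32 - ‖x₁ - x₀‖) (1 / 32 - ‖y₁ - x₀‖))).trans
      (min_le_left _ _)
    linarith
  have hρy : closedBall y₁ ρ ⊆ B := by
    refine closedBall_subset_closedBall' ?_
    rw [dist_eq_norm]
    have := (min_le_right (s / 8) (min (1 / 32 - ‖x₁ - x₀‖) (1 / 32 - ‖y₁ - x₀‖))).trans
      (min_le_right _ _)
    linarith
  obtain ⟨e, he⟩ : ∃ e : Euc d, e = s⁻¹ • (x₁ - y₁) := ⟨_, rfl⟩
  have he1 : ‖e‖ = 1 := by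
    rw [he, norm_smul, Real.norm_of_nonneg (by positivity), ← hs]; field_simp
  have hse : x₁ - y₁ = s • e := by rw [he, smul_smul, mul_inv_cancel₀ hs0.ne', one_smul]
  have hee : ⟪e, e⟫ = 1 := by rw [real_inner_self_eq_norm_sq, he1]; norm_num
  set W := rankOne (2 * N * (1 / s - 1)) (2 * N / s) e with hW
  set S := hessD W (2 * 4097) with hS
  set X₁ : Dbl d := pr x₁ y₁ with hX₁
  set Z₀ : Dbl d := pr x₀ x₀ with hZ₀
  set b : Dbl d := antiD d (N • e) - (2 * 4096 : ℝ) • Z₀ - (2 : ℝ) • X₁ with hb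
  have hTX : ∀ X : Dbl d, ⟪b, X⟫ + ⟪S X, X⟫ / 2
      = N * (⟪e, X.fst - X.snd⟫ + (‖X.fst - X.snd‖ ^ 2 - ⟪e, X.fst - X.snd⟫ ^ 2) / s
          - ‖X.fst - X.snd‖ ^ 2)
        + 4096 * (‖X.fst - x₀‖ ^ 2 + ‖X.snd - x₀‖ ^ 2) + ‖X - X₁‖ ^ 2
        - (4096 * ‖Z₀‖ ^ 2 + ‖X₁‖ ^ 2) := by
    intro X
    have e1 : ‖X.fst - x₀‖ ^ 2 + ‖X.snd - x₀‖ ^ 2 = ‖X - Z₀‖ ^ 2 := by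
      rw [dbl_norm_sq]; rfl
    have e2 : ⟪antiD d (N • e), X⟫ = N * ⟪e, X.fst - X.snd⟫ := by
      rw [dbl_inner, antiD_fst, antiD_snd, inner_neg_left, real_inner_smul_left,
        real_inner_smul_left, inner_sub_right]; ring
    have e3 : ⟪b, X⟫ = N * ⟪e, X.fst - X.snd⟫ - 2 * 4096 * ⟪X, Z₀⟫ - 2 * ⟪X, X₁⟫ := by
      rw [hb, inner_sub_left, inner_sub_left, e2, real_inner_smul_left, real_inner_smul_left,
        real_inner_comm X Z₀, real_inner_comm X X₁]
    rw [e1, hS, hessD_inner, hW, rankOne_inner, e3, real_inner_self_eq_norm_sq,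
      real_inner_self_eq_norm_sq, norm_sub_sq_real X Z₀, norm_sub_sq_real X X₁]
    field_simp
    ring
  have hmaxD : ∀ X : Dbl d, X.fst ∈ closedBall x₁ ρ → X.snd ∈ closedBall y₁ ρ →
      u X.fst + (fun x => -u x) X.snd - (⟪b, X⟫ + ⟪S X, X⟫ / 2) + 1 * ‖X - pr x₁ y₁‖ ^ 2
        ≤ u x₁ + (fun x => -u x) y₁ - (⟪b, pr x₁ y₁⟫ + ⟪S (pr x₁ y₁), pr x₁ y₁⟫ / 2) := by
    intro X hXa hXb
    have h1 : Ψ (X.fst, X.snd) ≤ Ψ (x₁, y₁) := hmax ⟨hρx hXa, hρy hXb⟩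
    rw [hΨ₁] at h1
    simp only [hΨ] at h1
    set z := X.fst - X.snd with hz
    have h2 : s / 2 ≤ ⟪e, z⟫ := by
      rw [mem_closedBall, dist_eq_norm] at hXa hXb
      have a1 : z = s • e + ((X.fst - x₁) - (X.snd - y₁)) := by
        rw [← hse, hz]; abel
      have a2 := neg_le_of_abs_le (abs_real_inner_le_norm e ((X.fst - x₁) - (X.snd - y₁)))
      rw [he1, one_mul] at a2
      have a3 := norm_sub_le (X.fst - x₁) (X.snd - y₁)
      rw [a1, inner_add_right, inner_smul_right, hee]
      linarith
    have h3 := norm_le_quadratic hs0 he1 h2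
    have h4 : N * ‖z‖ ≤ N * (⟪e, z⟫ + (‖z‖ ^ 2 - ⟪e, z⟫ ^ 2) / s) := by gcongr
    have e3 : (pr x₁ y₁ : Dbl d).fst = x₁ := rfl
    have e4 : (pr x₁ y₁ : Dbl d).snd = y₁ := rfl
    rw [hTX, hTX, e3, e4, ← hs, hse, inner_smul_right, hee, ← hz, hX₁, sub_self, norm_zero]
    have e5 : (s ^ 2 - (s * 1) ^ 2) / s = 0 := by rw [mul_one, sub_self, zero_div]
    rw [e5]
    linarith
  -- closeness making the gradient error at most `260`
  set μ := min (1 / 8192) (1 / (2 * (‖W‖ + 1))) with hμ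
  have hμ0 : 0 < μ := by positivity
  have hμ1 : μ ≤ 1 / 8192 := min_le_left _ _
  have hμW : ‖W‖ * (2 * μ) ≤ 1 := by
    have h1 : μ ≤ 1 / (2 * (‖W‖ + 1)) := min_le_right _ _
    rw [le_div_iff₀ (by positivity)] at h1
    nlinarith [norm_nonneg W]
  obtain ⟨x, hx, y', hy', X, P, M₁, M₂, hX, hP, hM₁, hM₂, ht₁, ht₂, hq⟩ :=
    sums_lemma hρ0 (huB.mono hρx) (v := fun x => -u x) (huB.mono hρy).neg
      (fun x hx => hub x (hBball (hρx hx)))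
      (fun x hx => by rw [abs_neg]; exact hub x (hBball (hρy hx))) S (by
        intro X Z
        rw [hS, hessD_inner, hessD_inner, hW, rankOne_inner, rankOne_inner,
          real_inner_comm Z X, real_inner_comm (Z.fst - Z.snd) (X.fst - X.snd)]; ring) b one_pos hmaxD hμ0
  have hXa : ‖X.fst - x₁‖ ≤ μ := (dbl_fst_le (X - X₁)).trans hX
  have hXb : ‖X.snd - y₁‖ ≤ μ := (dbl_snd_le (X - X₁)).trans hX
  set ζ := (X.fst - x₁) - (X.snd - y₁) with hζ
  have hζn : ‖ζ‖ ≤ 2 * μ := (norm_sub_le _ _).trans (by linarith)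
  have hWz : N • e + W (X.fst - X.snd) = (N * (1 - 2 * s)) • e + W ζ := by
    have a1 : X.fst - X.snd = s • e + ζ := by rw [← hse, hζ]; abel
    rw [a1, map_add, map_smul, hW, rankOne_apply _ _ e e, hee]
    have : N = N * (1 - 2 * s) + 2 * N * s := by ring
    have a2 : s • ((2 * N * (1 / s - 1)) • e - (2 * N / s * 1) • e) = (-(2 * N * s)) • e := by
      rw [← sub_smul, smul_smul]; congr 1; field_simp; ring
    rw [a2, ← add_assoc, ← add_smul]; congr 2; ring
  have hWζ : ‖W ζ‖ ≤ 1 := (W.le_opNorm ζ).trans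
    ((mul_le_mul_of_nonneg_left hζn (norm_nonneg _)).trans hμW)
  have hp₁ : (b + S X + P).fst = (N * (1 - 2 * s)) • e + (W ζ + (2 * 4096 : ℝ) • (X.fst - x₀)
      + (2 : ℝ) • (X.fst - x₁) + P.fst) := by
    have : (b + S X + P).fst = (N • e + W (X.fst - X.snd)) + (2 * 4096 : ℝ) • (X.fst - x₀)
      + (2 : ℝ) • (X.fst - x₁) + P.fst := by
      rw [hb, hS, hessD_apply]
      simp only [WithLp.add_fst, WithLp.sub_fst, WithLp.smul_fst, antiD_fst]
      simp only [hX₁, hZ₀, pr, WithLp.fst]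
      module
    rw [this, hWz]; abel
  have hp₂ : (b + S X + P).snd = -((N * (1 - 2 * s)) • e) + (-W ζ + (2 * 4096 : ℝ) • (X.snd - x₀)
      + (2 : ℝ) • (X.snd - y₁) + P.snd) := by
    have : (b + S X + P).snd = -(N • e + W (X.fst - X.snd)) + (2 * 4096 : ℝ) • (X.snd - x₀)
      + (2 : ℝ) • (X.snd - y₁) + P.snd := by
      rw [hb, hS, hessD_apply]
      simp only [WithLp.add_snd, WithLp.sub_snd, WithLp.smul_snd, antiD_snd]
      simp only [hX₁, hZ₀, pr, WithLp.snd]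
      module
    rw [this, hWz]; abel
  have hNe : ‖(N * (1 - 2 * s)) • e‖ = N * (1 - 2 * s) := by
    rw [norm_smul, he1, mul_one, Real.norm_of_nonneg (mul_nonneg (by linarith) (by linarith))]
  have hNlow : N * (7 / 8) ≤ N * (1 - 2 * s) := by gcongr; linarith
  have hNup : N * (1 - 2 * s) ≤ N := by nlinarith
  have err : ∀ (w a c c' : Euc d), ‖w‖ ≤ 1 → ‖a - c‖ ≤ μ → ‖c - x₀‖ ≤ 1 / 32 → ‖c'‖ ≤ μ →
      ‖w + (2 * 4096 : ℝ) • (a - x₀) + (2 : ℝ) • (a - c) + c'‖ ≤ 260 := by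
    intro w a c c' h1 h2 h3 h4
    have h5 : ‖a - x₀‖ ≤ 1 / 32 + μ := by
      have := norm_add_le (a - c) (c - x₀)
      rw [sub_add_sub_cancel] at this
      linarith
    have h6 := norm_add_le (w + (2 * 4096 : ℝ) • (a - x₀) + (2 : ℝ) • (a - c)) c'
    have h7 := norm_add_le (w + (2 * 4096 : ℝ) • (a - x₀)) ((2 : ℝ) • (a - c))
    have h8 := norm_add_le w ((2 * 4096 : ℝ) • (a - x₀))
    rw [norm_smul, Real.norm_of_nonneg (by norm_num)] at h7 h8
    linarith
  have hbd : ∀ a c : Euc d, ‖a‖ = N * (1 - 2 * s) → ‖c‖ ≤ 260 →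
      N / 4 ≤ ‖a + c‖ ∧ ‖a + c‖ ≤ 4 * N := by
    intro a c ha hc
    have h1 := norm_add_le a c
    have h2 := norm_sub_le (a + c) c
    rw [add_sub_cancel_right] at h2
    constructor <;> linarith
  have g₁ := hbd _ _ hNe (err (W ζ) X.fst x₁ P.fst hWζ hXa hx₁' ((dbl_fst_le P).trans hP))
  have g₂ := hbd _ _ ((norm_neg _).trans hNe)
    (err (-W ζ) X.snd y₁ P.snd (by rwa [norm_neg]) hXb hy₁' ((dbl_snd_le P).trans hP))
  rw [← hp₁] at g₁
  rw [← hp₂] at g₂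
  have F₁ := hsub x (hBball (hρx (ball_subset_closedBall hx))) _ M₁ hM₁ ht₁ g₁.1 g₁.2
  have F₂ := hsup y' (hBball (hρy (ball_subset_closedBall hy'))) _ M₂ hM₂ ht₂ g₂.1 g₂.2
  -- the directions `(ξ, ξ)` only see the penalization, the direction `(e, -e)` sees the concavity
  have dq : ∀ ξ : Euc d, qf M₁ ξ + qf M₂ ξ ≤ 16390 * ‖ξ‖ ^ 2 := by
    intro ξ
    have h1 := hq (pr ξ ξ)
    rw [hS, hessD_inner, real_inner_self_eq_norm_sq, dbl_norm_sq] at h1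
    simp only [WithLp.fst, WithLp.snd, sub_self, map_zero, inner_zero_left] at h1
    have : μ * (‖ξ‖ ^ 2 + ‖ξ‖ ^ 2) ≤ 1 * (‖ξ‖ ^ 2 + ‖ξ‖ ^ 2) := by gcongr; linarith
    linarith
  have dqe : qf M₁ e + qf M₂ e ≤ -8 * N + 16390 := by
    have h1 := hq (pr e (-e))
    rw [hS, hessD_inner, real_inner_self_eq_norm_sq, dbl_norm_sq] at h1
    have e1 : qf M₂ (-e) = qf M₂ e := by
      rw [← neg_one_smul ℝ e, qf_arg_smul]; norm_num
    have e2 : ⟪W (e - -e), e - -e⟫ = -8 * N := by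
      rw [show e - -e = (2 : ℝ) • e by module, hW, rankOne_inner]
      simp only [inner_smul_left, inner_smul_right, hee, conj_trivial]
      field_simp; ring
    simp only [WithLp.fst, WithLp.snd, e1, e2, norm_neg, he1] at h1
    linarith
  set Q : Mat d := (16390 : ℝ) • 1 - (M₁ + M₂) with hQ
  have hQP : Q.PosSemidef := posSemidef_of_qf ((isHermitian_smul_one _).sub (hM₁.add hM₂))
    fun ξ => by rw [hQ, qf_sub, qf_add, qf_smul_one]; linarith [dq ξ]
  have hQn : 8 * N ≤ matOpNorm Q := by
    have h1 := (le_abs_self _).trans (abs_qf_le Q e)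
    rw [hQ, qf_sub, qf_add, qf_smul_one, ← hQ, he1] at h1
    linarith
  have h1 := (hF.2 M₁ Q hM₁ hQP).1
  rw [show M₁ + Q = -M₂ + (16390 : ℝ) • 1 by rw [hQ]; abel] at h1
  have h2 := hF.add_smul_one_le hLam hM₂.neg (c := 16390) (by norm_num)
  have h3 := mul_le_mul_of_nonneg_left hQn hlam.le
  linarith

end IshiiLions

/-! ### The Lipschitz estimate, uniform in `q` -/

section Lipschitz
variable {d : ℕ}

/-- `u` is a viscosity subsolution of `|q + Du|^θ F(D²u) = f` in the unit ball for some exponent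
`-1 < θ ≤ Θ` and some `f` with `‖f (1 + |q|)^(-θ)‖_∞ ≤ ε`. -/
def SmallSub (Θ ε : ℝ) (F : Mat d → ℝ) (q : Euc d) (u : Euc d → ℝ) : Prop :=
  ∃ θ f : Euc d → ℝ, (∀ x ∈ ball (0 : Euc d) 1, -1 < θ x ∧ θ x ≤ Θ) ∧
    (∀ x ∈ ball (0 : Euc d) 1, |f x| * (1 + ‖q‖) ^ (-(θ x)) ≤ ε) ∧ ViscSubSol F θ f q u

/-- Bound for `((1 + |q|) / |q + p|)^θ` when `|p| ≤ P` and `|q + p| ≥ κ`. -/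
def errC (Θ P κ : ℝ) : ℝ := (1 + (1 + P) / κ) ^ Θ + (1 + P)

theorem errC_pos {Θ P κ : ℝ} (hP : 0 ≤ P) (hκ : 0 < κ) : 0 < errC Θ P κ := by
  unfold errC; positivity

theorem ratio_rpow_le {Θ P κ a b t : ℝ} (hP : 0 ≤ P) (hκ : 0 < κ) (ha : 0 ≤ a)
    (hb : κ ≤ b) (h1 : a ≤ P + b) (h2 : b ≤ P + a) (ht : -1 < t) (htΘ : t ≤ Θ) :
    ((1 + a) / b) ^ t ≤ errC Θ P κ := by
  have hb0 : 0 < b := hκ.trans_le hb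
  have hR : 1 ≤ 1 + (1 + P) / κ := by
    have : 0 ≤ (1 + P) / κ := by positivity
    linarith
  rcases le_or_gt 0 t with h0 | h0
  · have hr : (1 + a) / b ≤ 1 + (1 + P) / κ := by
      calc (1 + a) / b ≤ (b + (1 + P)) / b := div_le_div_of_nonneg_right (by linarith) hb0.le
        _ = 1 + (1 + P) / b := by field_simp
        _ ≤ _ := by gcongr
    have e1 : ((1 + a) / b) ^ t ≤ (1 + (1 + P) / κ) ^ t :=
      Real.rpow_le_rpow (by positivity) hr h0
    have e2 := Real.rpow_le_rpow_of_exponent_le hR htΘ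
    unfold errC; linarith
  · have hr : b / (1 + a) ≤ 1 + P := by
      rw [div_le_iff₀ (by positivity)]; nlinarith [mul_nonneg hP ha]
    have e0 : ((1 + a) / b) ^ t = (b / (1 + a)) ^ (-t) := by
      rw [Real.rpow_neg (by positivity), ← Real.inv_rpow (by positivity), inv_div]
    have e1 : (b / (1 + a)) ^ (-t) ≤ (1 + P) ^ (-t) :=
      Real.rpow_le_rpow (by positivity) hr (by linarith)
    have e2 : (1 + P) ^ (-t) ≤ (1 + P) ^ (1 : ℝ) :=
      Real.rpow_le_rpow_of_exponent_le (by linarith) (by linarith)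
    rw [Real.rpow_one] at e2
    have : 0 ≤ (1 + (1 + P) / κ) ^ Θ := by positivity
    unfold errC; linarith

/-- Away from the critical set `q + p = 0` the degenerate equation controls `F` with a small
error, uniformly in `q`. -/
theorem SmallSub.touch {Θ ε : ℝ} {F : Mat d → ℝ} {q : Euc d} {u : Euc d → ℝ}
    (h : SmallSub Θ ε F q u) {P κ : ℝ} (hκ : 0 < κ) {x p : Euc d} {M : Mat d}
    (hx : x ∈ ball (0 : Euc d) 1) (hM : M.IsHermitian) (ht : TouchA u x p M)
    (hP : ‖p‖ ≤ P) (hqp : κ ≤ ‖q + p‖) : -(ε * errC Θ P κ) ≤ F M := by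
  obtain ⟨θ, f, hθ, hf, hsub⟩ := h
  have hb : 0 < ‖q + p‖ := hκ.trans_le hqp
  have h1 := touch_sub hsub hx hM ht (norm_pos_iff.1 hb)
  have hP0 : 0 ≤ P := (norm_nonneg p).trans hP
  have hr := ratio_rpow_le hP0 hκ (norm_nonneg q) hqp
    (by have := norm_sub_le (q + p) p; rw [add_sub_cancel_right] at this; linarith)
    (by have := norm_add_le q p; linarith) (hθ x hx).1 (hθ x hx).2
  have ha : 0 < 1 + ‖q‖ := by positivity
  have hpow : 0 < ‖q + p‖ ^ θ x := by positivity
  have e : |f x| * (1 + ‖q‖) ^ (-(θ x)) * ((1 + ‖q‖) / ‖q + p‖) ^ θ x * ‖q + p‖ ^ θ x = |f x| := by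
    rw [Real.div_rpow ha.le hb.le, Real.rpow_neg ha.le]
    have : (1 + ‖q‖) ^ θ x ≠ 0 := by positivity
    field_simp
  have h2 : |f x| * (1 + ‖q‖) ^ (-(θ x)) * ((1 + ‖q‖) / ‖q + p‖) ^ θ x ≤ ε * errC Θ P κ :=
    mul_le_mul (hf x hx) hr (by positivity) ((by positivity : (0:ℝ) ≤ _).trans (hf x hx))
  have h3 : -(ε * errC Θ P κ) * ‖q + p‖ ^ θ x ≤ F M * ‖q + p‖ ^ θ x := by
    have := mul_le_mul_of_nonneg_right h2 hpow.le
    rw [e] at this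
    have := neg_abs_le (f x)
    linarith
  exact le_of_mul_le_mul_right h3 hpow

/-- Lipschitz estimate, uniform in `q`: for large `|q|` the operator is nondegenerate on moderate
slopes, for bounded `|q|` it is nondegenerate on large slopes. -/
theorem lipschitz_est {lam Lam Θ : ℝ} (hlam : 0 < lam) (hLam : 0 ≤ Lam) :
    ∃ ε₁ > 0, ∃ L > 0, ∀ (F : Mat d → ℝ) (q : Euc d) (u : Euc d → ℝ) (ε : ℝ), ε ≤ ε₁ →
      UniformlyElliptic lam Lam F → ContinuousOn u (ball 0 1) →
      (∀ x ∈ ball (0 : Euc d) 1, |u x| ≤ 1) → SmallSub Θ ε F q u →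
      SmallSub Θ ε (fun M => -F (-M)) (-q) (fun x => -u x) →
      ∀ x y : Euc d, ‖x‖ ≤ 15 / 16 → ‖y - x‖ ≤ 1 / 32 → u x - u y ≤ L * ‖x - y‖ := by
  set N₀ : ℝ := 600 + (2 + Lam * 16390) / (8 * lam) with hN₀
  have hpos : 0 ≤ (2 + Lam * 16390) / (8 * lam) := by positivity
  have hNL : 2 + Lam * 16390 < 8 * lam * N₀ := by
    have : 8 * lam * N₀ = 8 * lam * 600 + (2 + Lam * 16390) := by rw [hN₀]; field_simp
    nlinarith
  set N₁ : ℝ := 4 * (4 * N₀ + 2) + N₀ with hN₁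
  have hN01 : N₀ ≤ N₁ := by linarith
  have hE : 0 < errC Θ (4 * N₁) 1 := errC_pos (by linarith) one_pos
  refine ⟨1 / errC Θ (4 * N₁) 1, by positivity, N₁ + 128, by linarith, ?_⟩
  intro F q u ε hε hF huc hub hsub hsup x y hx hy
  have hε1 : ε * errC Θ (4 * N₁) 1 ≤ 1 := by rwa [le_div_iff₀ hE] at hε
  have main : ∀ N : ℝ, N₀ ≤ N → N ≤ N₁ → (∀ p : Euc d, N / 4 ≤ ‖p‖ → ‖p‖ ≤ 4 * N → 1 ≤ ‖q + p‖) →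
      u x - u y ≤ (N₁ + 128) * ‖x - y‖ := by
    intro N h0 h1 hp
    have := ishii_lions hlam hLam hF huc hub (N := N) (by linarith) (hNL.trans_le (by gcongr))
      (fun z hz p M hM ht h2 h3 => by
        have := hsub.touch one_pos hz hM ht (P := 4 * N₁) (by linarith) (hp p h2 h3)
        linarith)
      (fun z hz p M hM ht h2 h3 => by
        have := hsup.touch one_pos hz hM ht (P := 4 * N₁) (by linarith) (by
          have := hp (-p) (by rwa [norm_neg]) (by rwa [norm_neg])
          rwa [← norm_neg, neg_add, neg_neg] at this)
        linarith) hx hy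
    refine this.trans ?_
    gcongr
  rcases le_total (4 * N₀ + 1) ‖q‖ with hq | hq
  · refine main N₀ le_rfl hN01 fun p _ h2 => ?_
    have := norm_sub_le (q + p) p
    rw [add_sub_cancel_right] at this
    linarith
  · refine main N₁ hN01 le_rfl fun p h1 _ => ?_
    have := norm_sub_le (q + p) q
    rw [add_sub_cancel_left] at this
    linarith

end Lipschitz

/-! ### Stability -/

section Stability
variable {d : ℕ}

theorem quad_shift (x p : Euc d) {M : Mat d} (hM : M.IsHermitian) (y z : Euc d) :
    quad x p M z = quad x p M y + ⟪p + Matrix.toEuclideanCLM (𝕜 := ℝ) M (y - x), z - y⟫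
      + qf M (z - y) / 2 := by
  have h1 : z - x = (y - x) + (z - y) := by abel
  simp only [quad]
  rw [h1, qf_sum hM, inner_add_right, inner_add_left]
  ring

theorem touchA_of_isMaxOn {u : Euc d → ℝ} {x₀ x p : Euc d} {r : ℝ} {M : Mat d}
    (hM : M.IsHermitian) (hx : x ∈ ball x₀ r)
    (hmax : ∀ y ∈ closedBall x₀ r, u y - quad x₀ p M y ≤ u x - quad x₀ p M x) :
    TouchA u x (p + Matrix.toEuclideanCLM (𝕜 := ℝ) M (x - x₀)) M := by
  filter_upwards [isOpen_ball.mem_nhds hx] with y hy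
  have h1 := hmax y (ball_subset_closedBall hy)
  rw [quad_shift x₀ p hM x y] at h1
  linarith

/-- If all increments of `k` on a ball are bounded above by the single form `M / 2`, then `k` is constant
there, and hence `M` is nonnegative. -/
theorem posSemidef_of_all_touch {k : Euc d → ℝ} {x₀ : Euc d} {r : ℝ} (hr : 0 < r) {M : Mat d}
    (hM : M.IsHermitian)
    (hk : ∀ y ∈ ball x₀ r, ∀ z ∈ ball x₀ r, k z - k y ≤ qf M (z - y) / 2) : M.PosSemidef := by
  have hle : ∀ y ∈ ball x₀ r, ∀ z ∈ ball x₀ r, k z ≤ k y := by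
    intro y hy z hz
    have hseg : ∀ t : ℝ, 0 ≤ t → t ≤ 1 → y + t • (z - y) ∈ ball x₀ r := fun t h0 h1 =>
      (convex_ball x₀ r).add_smul_sub_mem hy hz ⟨h0, h1⟩
    have := telescoping_le (ψ := fun t => k (y + t • (z - y))) (C := qf M (z - y) / 2) (by
      intro t s h0 hts h1
      have := hk _ (hseg t h0 (hts.trans h1)) _ (hseg s (h0.trans hts) h1)
      rw [add_sub_add_left_eq_sub, ← sub_smul, qf_arg_smul] at this
      linarith)
    simpa using this
  refine posSemidef_of_qf hM fun v => ?_
  have hx₀ : x₀ ∈ ball x₀ r := mem_ball_self hr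
  set c : ℝ := r / (2 * (‖v‖ + 1)) with hc
  have hc0 : 0 < c := by positivity
  have hz : x₀ + c • v ∈ ball x₀ r := by
    rw [mem_ball, dist_eq_norm, add_sub_cancel_left, norm_smul, Real.norm_of_nonneg hc0.le, hc,
      div_mul_eq_mul_div, div_lt_iff₀ (by positivity)]
    nlinarith [norm_nonneg v]
  have h1 := hk _ hx₀ _ hz
  have h2 := hle _ hz _ hx₀
  rw [add_sub_cancel_left, qf_arg_smul] at h1
  have h3 : 0 ≤ c ^ 2 * qf M v := by linarith
  exact nonneg_of_mul_nonneg_right (by linarith) (by positivity : 0 < c ^ 2)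

/-- Stability along an ultrafilter: uniform limits of subsolutions with vanishing right-hand sides
are subsolutions of `G (D²h) = 0`, although the equations degenerate at slopes `-q n` and the `q n`
are not assumed to converge or to be bounded. -/
theorem stability {ι : Type*} (U : Ultrafilter ι) {lam Lam Θ : ℝ} (hlam : 0 < lam) (hLam : 0 < Lam)
    {F : ι → Mat d → ℝ} {G : Mat d → ℝ} (hG : UniformlyElliptic lam Lam G)
    (hFG : ∀ M : Mat d, M.IsHermitian → Tendsto (fun n => F n M) U (𝓝 (G M)))
    {q : ι → Euc d} {u : ι → Euc d → ℝ} {h : Euc d → ℝ} {ε : ι → ℝ}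
    (huc : ∀ n, ContinuousOn (u n) (ball 0 1)) (hhc : ContinuousOn h (ball 0 (15 / 16)))
    (hsub : ∀ n, SmallSub Θ (ε n) (F n) (q n) (u n)) (hε : Tendsto ε U (𝓝 0))
    (hconv : ∀ η > 0, ∀ᶠ n in (U : Filter ι), ∀ x ∈ ball (0 : Euc d) (15 / 16),
      |u n x - h x| ≤ η) :
    QSub G h (ball 0 (15 / 16)) := by
  intro x₀ hx₀ p M hM ht
  suffices key : ∀ μ : ℝ, 0 < μ → 0 ≤ G (M + (2 * μ) • 1) by
    refine le_of_forall_pos_le_add fun η hη => ?_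
    have h1 := key (η / (2 * Lam)) (by positivity)
    have h2 := hG.add_smul_one_le hLam.le hM (c := 2 * (η / (2 * Lam))) (by positivity)
    have h3 : Lam * (2 * (η / (2 * Lam))) = η := by field_simp
    linarith
  intro μ hμ
  by_contra hneg
  set M' : Mat d := M + (2 * μ) • 1 with hM'
  have hM'h : M'.IsHermitian := hM.add (isHermitian_smul_one _)
  obtain ⟨r, hr, hrs⟩ : ∃ r > 0, closedBall x₀ r ⊆ ball (0 : Euc d) (15 / 16) ∩
      {y | h y ≤ h x₀ + ⟪p, y - x₀⟫ + qf M (y - x₀) / 2} :=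
    nhds_basis_closedBall.mem_iff.1 (inter_mem (isOpen_ball.mem_nhds hx₀) ht)
  have hball : ball (0 : Euc d) (15 / 16) ⊆ ball 0 1 := ball_subset_ball (by norm_num)
  have hcpt : IsCompact (closedBall x₀ r) := isCompact_closedBall _ _
  have hquadc : ∀ ξ, Continuous (quad x₀ ξ M') := fun ξ => (quad_contDiff x₀ ξ M').continuous
  -- maximum points of `u n` minus a tilted quadratic approach the critical set, where `Dφ = -q n`
  have K : ∀ ξ : Euc d, ‖ξ‖ < μ * r → ∃ z, ‖z - x₀‖ ≤ ‖ξ‖ / μ ∧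
      (∀ y ∈ closedBall x₀ r, h y - quad x₀ (p + ξ) M' y ≤ h z - quad x₀ (p + ξ) M' z) ∧
      Tendsto q U (𝓝 (-(p + ξ + Matrix.toEuclideanCLM (𝕜 := ℝ) M' (z - x₀)))) := by
    intro ξ hξ
    set φ := quad x₀ (p + ξ) M' with hφ
    have hex : ∀ n, ∃ x ∈ closedBall x₀ r, ∀ y ∈ closedBall x₀ r, u n y - φ y ≤ u n x - φ x := by
      intro n
      obtain ⟨x, hx, hmax⟩ := hcpt.exists_isMaxOn ⟨x₀, mem_closedBall_self hr.le⟩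
        (f := fun y => u n y - φ y)
        (((huc n).mono fun y hy => hball (hrs hy).1).sub (hquadc _).continuousOn)
      exact ⟨x, hx, fun y hy => hmax hy⟩
    choose x hx hxmax using hex
    obtain ⟨z, hz, hzlim⟩ := hcpt.ultrafilter_le_nhds (U.map x)
      (le_principal_iff.2 (Filter.mem_map.2 (univ_mem' hx)))
    have hzt : Tendsto x U (𝓝 z) := hzlim
    have hhx : Tendsto (fun n => h (x n)) U (𝓝 (h z)) :=
      (hhc.continuousAt (isOpen_ball.mem_nhds (hrs hz).1)).tendsto.comp hzt
    have hφx : Tendsto (fun n => φ (x n)) U (𝓝 (φ z)) := (hquadc _).continuousAt.tendsto.comp hzt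
    have hzmax : ∀ y ∈ closedBall x₀ r, h y - φ y ≤ h z - φ z := by
      intro y hy
      refine le_of_forall_pos_le_add fun η hη => ?_
      refine ge_of_tendsto ((hhx.sub hφx).add_const η) ?_
      filter_upwards [hconv (η / 2) (by positivity)] with n hn
      have h1 := abs_le.1 (hn y (hrs hy).1)
      have h2 := abs_le.1 (hn (x n) (hrs (hx n)).1)
      have h3 := hxmax n y hy
      linarith [h1.1, h2.2]
    have hzx : ‖z - x₀‖ ≤ ‖ξ‖ / μ := by
      have h1 := hzmax x₀ (mem_closedBall_self hr.le)
      have h2 := (hrs hz).2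
      simp only [hφ, quad, sub_self, inner_zero_right, qf_zero_arg, inner_add_left, Set.mem_ofPred_eq,
        hM', qf_add, qf_smul_one] at h1 h2
      have h3 := neg_le_of_abs_le (abs_real_inner_le_norm ξ (z - x₀))
      have h4 : μ * ‖z - x₀‖ ^ 2 ≤ ‖ξ‖ * ‖z - x₀‖ := by linarith
      rw [le_div_iff₀ hμ]
      rcases (norm_nonneg (z - x₀)).eq_or_lt with h5 | h5
      · rw [← h5, zero_mul]; exact norm_nonneg _
      · refine le_of_mul_le_mul_right ?_ h5
        linarith
    have hzr : z ∈ ball x₀ r := by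
      rw [mem_ball, dist_eq_norm]
      refine hzx.trans_lt ?_
      rw [div_lt_iff₀ hμ]; linarith
    set T := Matrix.toEuclideanCLM (𝕜 := ℝ) M' with hT
    have hpt : Tendsto (fun n => p + ξ + T (x n - x₀)) U (𝓝 (p + ξ + T (z - x₀))) :=
      ((T.continuous.tendsto _).comp (hzt.sub_const x₀)).const_add _
    refine ⟨z, hzx, hzmax, ?_⟩
    have hcrit : Tendsto (fun n => q n + (p + ξ + T (x n - x₀))) U (𝓝 0) := by
      rw [Metric.tendsto_nhds]
      intro κ hκ
      by_contra hnot
      rw [← Ultrafilter.eventually_not] at hnot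
      have hlim := (hε.mul_const (errC Θ (‖p + ξ + T (z - x₀)‖ + 1) κ)).neg
      rw [zero_mul, neg_zero] at hlim
      refine hneg (le_of_tendsto_of_tendsto hlim (hFG M' hM'h) ?_)
      filter_upwards [hnot, hzt.eventually (isOpen_ball.mem_nhds hzr),
        hpt.norm.eventually (ge_mem_nhds (lt_add_one _))] with n h1 h2 h3
      rw [dist_zero_right, not_lt] at h1
      exact (hsub n).touch hκ (hball (hrs (hx n)).1) hM'h
        (touchA_of_isMaxOn hM'h h2 (hxmax n)) h3 h1
    simpa using hcrit.sub hpt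
  obtain ⟨z₀, hz₀, -, hq₀⟩ := K 0 (by rw [norm_zero]; positivity)
  rw [norm_zero, zero_div] at hz₀
  have hz₀' : z₀ - x₀ = 0 := norm_le_zero_iff.1 hz₀
  rw [hz₀', map_zero, add_zero, add_zero] at hq₀
  set T := Matrix.toEuclideanCLM (𝕜 := ℝ) M' with hT
  have K' : ∀ ξ : Euc d, ‖ξ‖ < μ * r → ∃ z, ξ + T (z - x₀) = 0 ∧
      ∀ y ∈ closedBall x₀ r, h y - quad x₀ (p + ξ) M' y ≤ h z - quad x₀ (p + ξ) M' z := by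
    intro ξ hξ
    obtain ⟨z, -, hz, hq⟩ := K ξ hξ
    -- the limit of `q n` does not depend on `ξ`, so the slope at the contact point is always `p`
    refine ⟨z, ?_, hz⟩
    have h1 := neg_injective (tendsto_nhds_unique hq hq₀)
    rwa [add_assoc, add_eq_left] at h1
  -- every small `ξ` is a value of `T`, so `T` is invertible
  have hsurj : Function.Surjective T := by
    intro v
    set c : ℝ := μ * r / (2 * (‖v‖ + 1)) with hc
    have hc0 : 0 < c := by positivity
    obtain ⟨z, hz, -⟩ := K' (c • v) (by
      rw [norm_smul, Real.norm_of_nonneg hc0.le, hc, div_mul_eq_mul_div,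
        div_lt_iff₀ (by positivity)]
      nlinarith [norm_nonneg v, mul_pos hμ hr])
    refine ⟨-(c⁻¹ • (z - x₀)), ?_⟩
    rw [map_neg, map_smul, ← neg_eq_of_add_eq_zero_right hz, smul_neg, neg_neg,
      inv_smul_smul₀ hc0.ne']
  have hinj : Function.Injective T :=
    (LinearMap.injective_iff_surjective (f := (T : Euc d →ₗ[ℝ] Euc d))).2 hsurj
  obtain ⟨r', hr', hr's⟩ : ∃ r' > 0, ball x₀ r' ⊆ closedBall x₀ r ∩ {y | ‖T (y - x₀)‖ < μ * r} := by
    refine nhds_basis_ball.mem_iff.1 (inter_mem (closedBall_mem_nhds x₀ hr) ?_)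
    have hcont : Continuous fun y => ‖T (y - x₀)‖ := by fun_prop
    refine (isOpen_lt hcont continuous_const).mem_nhds ?_
    simp only [Set.mem_ofPred_eq, sub_self, map_zero, norm_zero]
    positivity
  -- by invertibility each `y` near `x₀` is the contact point of the tilt `ξ = -T (y - x₀)`
  have hpsd : M'.PosSemidef := by
    refine posSemidef_of_all_touch (x₀ := x₀) (k := fun y => h y - ⟪p, y⟫) hr' hM'h fun y hy z hz => ?_
    obtain ⟨w, hw, hwmax⟩ := K' (-(T (y - x₀))) (by rw [norm_neg]; exact (hr's hy).2)
    have hwy : w = y := by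
      have := hinj (neg_add_eq_zero.1 hw)
      exact (sub_left_inj.1 this).symm
    rw [hwy] at hwmax
    have h1 := hwmax z (hr's hz).1
    rw [quad_shift x₀ _ hM'h y z, neg_add_cancel_right, inner_sub_right] at h1
    linarith
  have := hG.mono hlam (M := 0) (N := M') Matrix.isHermitian_zero hpsd
  rw [zero_add, hG.1] at this
  exact hneg this

end Stability

/-! ### Compactness along an ultrafilter -/

section Compactness
variable {d : ℕ} {ι : Type*}

theorem exists_ultralimit (U : Ultrafilter ι) {a : ι → ℝ} {B : ℝ} (h : ∀ n, |a n| ≤ B) :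
    ∃ l, |l| ≤ B ∧ Tendsto a U (𝓝 l) := by
  obtain ⟨l, hl, hlim⟩ := (isCompact_Icc (a := -B) (b := B)).ultrafilter_le_nhds (U.map a)
    (le_principal_iff.2 (Filter.mem_map.2 (univ_mem' fun n => abs_le.1 (h n))))
  exact ⟨l, abs_le.2 hl, hlim⟩

/-- Pointwise limits of uniformly elliptic operators along an ultrafilter are uniformly elliptic. -/
theorem exists_limit_operator (U : Ultrafilter ι) {lam Lam : ℝ} (hlam : 0 < lam) (hLam : 0 ≤ Lam)
    {F : ι → Mat d → ℝ} (hF : ∀ n, UniformlyElliptic lam Lam (F n)) :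
    ∃ G : Mat d → ℝ, UniformlyElliptic lam Lam G ∧
      ∀ M : Mat d, M.IsHermitian → Tendsto (fun n => F n M) U (𝓝 (G M)) := by
  have hex : ∀ M : Mat d, ∃ l, M.IsHermitian → Tendsto (fun n => F n M) U (𝓝 l) := by
    intro M
    by_cases hM : M.IsHermitian
    · obtain ⟨l, -, hl⟩ := exists_ultralimit U fun n => (hF n).abs_le hlam hLam hM
      exact ⟨l, fun _ => hl⟩
    · exact ⟨0, fun h => absurd h hM⟩
  choose G hG using hex
  refine ⟨G, ⟨?_, fun M N hM hN => ?_⟩, hG⟩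
  · refine tendsto_nhds_unique (hG 0 Matrix.isHermitian_zero) ?_
    simp only [fun n => (hF n).1]
    exact tendsto_const_nhds
  · have h1 := (hG (M + N) (hM.add hN.isHermitian)).sub (hG M hM)
    exact ⟨ge_of_tendsto h1 (Eventually.of_forall fun n => ((hF n).2 M N hM hN).1),
      le_of_tendsto h1 (Eventually.of_forall fun n => ((hF n).2 M N hM hN).2)⟩

/-- Arzelà–Ascoli along an ultrafilter. -/
theorem exists_uniform_limit (U : Ultrafilter ι) {u : ι → Euc d → ℝ} {L : ℝ} (hL : 0 < L)
    (huc : ∀ n, ContinuousOn (u n) (ball 0 1)) (hub : ∀ n, ∀ x ∈ ball (0 : Euc d) 1, |u n x| ≤ 1)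
    (hlip : ∀ n, ∀ x y : Euc d, ‖x‖ ≤ 15 / 16 → ‖y - x‖ ≤ 1 / 32 →
      u n x - u n y ≤ L * ‖x - y‖) :
    ∃ h : Euc d → ℝ, ContinuousOn h (ball 0 (15 / 16)) ∧
      (∀ x ∈ ball (0 : Euc d) (15 / 16), |h x| ≤ 1) ∧
      ∀ η > 0, ∀ᶠ n in (U : Filter ι), ∀ x ∈ ball (0 : Euc d) (15 / 16), |u n x - h x| ≤ η := by
  have hin : closedBall (0 : Euc d) (15 / 16) ⊆ ball 0 1 := closedBall_subset_ball (by norm_num)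
  have hin' : ball (0 : Euc d) (15 / 16) ⊆ closedBall 0 (15 / 16) := ball_subset_closedBall
  have hex : ∀ x : Euc d, ∃ l, x ∈ ball (0 : Euc d) 1 → |l| ≤ 1 ∧ Tendsto (fun n => u n x) U (𝓝 l) := by
    intro x
    by_cases hx : x ∈ ball (0 : Euc d) 1
    · obtain ⟨l, hl⟩ := exists_ultralimit U fun n => hub n x hx
      exact ⟨l, fun _ => hl⟩
    · exact ⟨0, fun h => absurd h hx⟩
  choose h hh using hex
  have hlip' : ∀ n, ∀ x ∈ closedBall (0 : Euc d) (15 / 16), ∀ y ∈ closedBall (0 : Euc d) (15 / 16),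
      ‖x - y‖ ≤ 1 / 32 → |u n x - u n y| ≤ L * ‖x - y‖ := by
    intro n x hx y hy hxy
    rw [mem_closedBall_zero_iff] at hx hy
    rw [abs_le]
    have h1 := hlip n x y hx (by rwa [norm_sub_rev])
    have h2 := hlip n y x hy hxy
    rw [norm_sub_rev y x] at h2
    constructor <;> linarith
  have hunif : ∀ η > 0, ∀ᶠ n in (U : Filter ι), ∀ x ∈ ball (0 : Euc d) (15 / 16),
      |u n x - h x| ≤ η := by
    intro η hη
    set τ := min (1 / 32) (η / (3 * L)) with hτ
    have hτ0 : 0 < τ := by positivity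
    have hτL : L * τ ≤ η / 3 := by
      have : τ ≤ η / (3 * L) := min_le_right _ _
      calc L * τ ≤ L * (η / (3 * L)) := by gcongr
        _ = η / 3 := by field_simp
    obtain ⟨t, hts, htf, htc⟩ :=
      (isCompact_closedBall (0 : Euc d) (15 / 16)).finite_cover_balls hτ0
    have hev : ∀ᶠ n in (U : Filter ι), ∀ c ∈ t, |u n c - h c| ≤ η / 3 := by
      refine (eventually_all_finite htf).2 fun c hc => ?_
      have h1 := ((hh c (hin (hts hc))).2.sub_const (h c)).abs
      rw [sub_self, abs_zero] at h1
      exact h1.eventually (ge_mem_nhds (by positivity))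
    filter_upwards [hev] with n hn x hx
    obtain ⟨c, hc, hxc⟩ := mem_iUnion₂.1 (htc (hin' hx))
    rw [mem_ball, dist_eq_norm] at hxc
    have hxc1 : ‖x - c‖ ≤ 1 / 32 := hxc.le.trans (min_le_left _ _)
    have hLx : L * ‖x - c‖ ≤ η / 3 := (by gcongr : L * ‖x - c‖ ≤ L * τ).trans hτL
    have h1 := (hlip' n x (hin' hx) c (hts hc) hxc1).trans hLx
    have h2 : |h x - h c| ≤ η / 3 :=
      le_of_tendsto ((hh x (hin (hin' hx))).2.sub (hh c (hin (hts hc))).2).abs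
        (Eventually.of_forall fun m => (hlip' m x (hin' hx) c (hts hc) hxc1).trans hLx)
    have h3 := hn c hc
    rw [abs_le] at *
    constructor <;> linarith [h1.1, h1.2, h2.1, h2.2, h3.1, h3.2]
  refine ⟨h, ?_, fun x hx => (hh x (hin (hin' hx))).1, hunif⟩
  have hU : TendstoUniformlyOn u h U (ball 0 (15 / 16)) := by
    rw [Metric.tendstoUniformlyOn_iff]
    intro η hη
    filter_upwards [hunif (η / 2) (by positivity)] with n hn x hx
    rw [dist_comm, Real.dist_eq]
    linarith [hn x hx]
  exact hU.continuousOn (Frequently.of_forall fun n => (huc n).mono (hin'.trans hin))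

end Compactness

/-! ### Regularity of the limit -/

section Regularity
variable {d : ℕ}

theorem matOpNorm_smul {c : ℝ} (hc : 0 ≤ c) (M : Mat d) : matOpNorm (c • M) = c * matOpNorm M := by
  rw [matOpNorm, map_smul, norm_smul, Real.norm_of_nonneg hc, matOpNorm]

theorem UniformlyElliptic.rescale {lam Lam : ℝ} {G : Mat d → ℝ} (hG : UniformlyElliptic lam Lam G) :
    UniformlyElliptic lam Lam (fun M => 1 / 64 * G ((64 : ℝ) • M)) := by
  refine ⟨by simp only [smul_zero, hG.1, mul_zero], fun M N hM hN => ?_⟩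
  have h1 := hG.2 ((64 : ℝ) • M) ((64 : ℝ) • N) (hM.smul (IsSelfAdjoint.all _)) (hN.smul (by norm_num))
  rw [← smul_add, matOpNorm_smul (by norm_num)] at h1
  constructor <;> linarith [h1.1, h1.2]

theorem QSub.rescale {G : Mat d → ℝ} {h : Euc d → ℝ} (hq : QSub G h (ball 0 (15 / 16)))
    {x₁ : Euc d} (hx₁ : x₁ ∈ ball (0 : Euc d) (3 / 4)) :
    QSub (fun M => 1 / 64 * G ((64 : ℝ) • M)) (fun y => h (x₁ + (1 / 8 : ℝ) • y)) (ball 0 1) := by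
  intro y hy p M hM ht
  have hmem : x₁ + (1 / 8 : ℝ) • y ∈ ball (0 : Euc d) (15 / 16) := by
    rw [mem_ball_zero_iff] at *
    have := norm_add_le x₁ ((1 / 8 : ℝ) • y)
    rw [norm_smul, Real.norm_of_nonneg (by norm_num)] at this
    linarith
  have htend : Tendsto (fun w : Euc d => (8 : ℝ) • (w - x₁)) (𝓝 (x₁ + (1 / 8 : ℝ) • y)) (𝓝 y) := by
    have hc : Continuous fun w : Euc d => (8 : ℝ) • (w - x₁) := by fun_prop
    have := hc.tendsto (x₁ + (1 / 8 : ℝ) • y)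
    simpa [smul_smul] using this
  have h1 := hq _ hmem ((8 : ℝ) • p) ((64 : ℝ) • M) (hM.smul (IsSelfAdjoint.all _)) (by
    filter_upwards [htend.eventually ht] with w hw
    have e1 : x₁ + (1 / 8 : ℝ) • ((8 : ℝ) • (w - x₁)) = w := by module
    have e2 : (8 : ℝ) • (w - x₁) - y = (8 : ℝ) • (w - (x₁ + (1 / 8 : ℝ) • y)) := by module
    rw [e1, e2, qf_arg_smul, real_inner_smul_right] at hw
    rw [qf_smul, real_inner_smul_left]
    linarith)
  simp only
  linarith

/-- The limit solves its equation only in `B_{15/16}`, so the assumed estimate is applied to its rescalings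
from the balls `B_{1/8}(x₁)`, `x₁ ∈ B_{3/4}`; this bounds the `C^{1,α}` norm on `B_{3/4}`. -/
theorem limit_regular {lam Lam α C₀ : ℝ} (hLam : 0 < Lam) (hα : α ∈ Set.Ioo (0 : ℝ) 1)
    (hC₀ : 0 < C₀)
    (hreg : ∀ G : Mat d → ℝ, UniformlyElliptic lam Lam G →
      ∀ h : Euc d → ℝ, ContinuousOn h (ball 0 1) →
      ViscSolPure G (fun _ => (0:ℝ)) h (ball 0 1) →
      ∃ Dh : Euc d → Euc d,
        (∀ y ∈ ball (0 : Euc d) (3/4), HasGradientAt h (Dh y) y) ∧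
        ∀ K : ℝ, (∀ x ∈ ball (0 : Euc d) 1, |h x| ≤ K) →
          (∀ x ∈ ball (0 : Euc d) (3/4), |h x| + ‖Dh x‖ ≤ C₀ * K) ∧
          ∀ x ∈ ball (0 : Euc d) (3/4), ∀ y ∈ ball (0 : Euc d) (3/4),
            ‖Dh x - Dh y‖ ≤ C₀ * K * ‖x - y‖ ^ α)
    {G : Mat d → ℝ} (hG : UniformlyElliptic lam Lam G) {h : Euc d → ℝ}
    (hhc : ContinuousOn h (ball 0 (15 / 16))) (hhb : ∀ x ∈ ball (0 : Euc d) (15 / 16), |h x| ≤ 1)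
    (hsub : QSub G h (ball 0 (15 / 16)))
    (hsup : QSub (fun M => -G (-M)) (fun x => -h x) (ball 0 (15 / 16))) :
    (∀ y ∈ ball (0 : Euc d) (3/4), HasGradientAt h (gradient h y) y) ∧
    (∀ x ∈ ball (0 : Euc d) (3/4), |h x| + ‖gradient h x‖ ≤ 200 * C₀) ∧
    ∀ x ∈ ball (0 : Euc d) (3/4), ∀ y ∈ ball (0 : Euc d) (3/4),
      ‖gradient h x - gradient h y‖ ≤ 200 * C₀ * ‖x - y‖ ^ α := by
  have loc : ∀ x₁ ∈ ball (0 : Euc d) (3 / 4), ∃ Dk : Euc d → Euc d,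
      (∀ w, ‖w - x₁‖ < 3 / 32 → HasGradientAt h ((8 : ℝ) • Dk ((8 : ℝ) • (w - x₁))) w) ∧
      (∀ w, ‖w - x₁‖ < 3 / 32 → |h w| + ‖Dk ((8 : ℝ) • (w - x₁))‖ ≤ C₀) ∧
      ∀ w w', ‖w - x₁‖ < 3 / 32 → ‖w' - x₁‖ < 3 / 32 →
        ‖Dk ((8 : ℝ) • (w - x₁)) - Dk ((8 : ℝ) • (w' - x₁))‖ ≤ C₀ * (8 * ‖w - w'‖) ^ α := by
    intro x₁ hx₁
    have hmaps : ∀ y ∈ ball (0 : Euc d) 1, x₁ + (1 / 8 : ℝ) • y ∈ ball (0 : Euc d) (15 / 16) := by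
      intro y hy
      rw [mem_ball_zero_iff] at *
      have := norm_add_le x₁ ((1 / 8 : ℝ) • y)
      rw [norm_smul, Real.norm_of_nonneg (by norm_num)] at this
      linarith
    have hs2 : QSub (fun M => -(1 / 64 * G ((64 : ℝ) • (-M))))
        (fun y => -h (x₁ + (1 / 8 : ℝ) • y)) (ball 0 1) := by
      have := hsup.rescale hx₁
      simpa only [smul_neg, mul_neg] using this
    obtain ⟨Dk, hk1, hk2⟩ := hreg _ hG.rescale (fun y => h (x₁ + (1 / 8 : ℝ) • y))
      (hhc.comp (Continuous.continuousOn (by fun_prop)) hmaps)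
      ⟨(hsub.rescale hx₁).pure hLam hG.rescale, QSub.pure_super hLam hG.rescale hs2⟩
    obtain ⟨hk3, hk4⟩ := hk2 1 (fun y hy => hhb _ (hmaps y hy))
    have hmem : ∀ w, ‖w - x₁‖ < 3 / 32 → (8 : ℝ) • (w - x₁) ∈ ball (0 : Euc d) (3 / 4) := by
      intro w hw
      rw [mem_ball_zero_iff, norm_smul, Real.norm_of_nonneg (by norm_num)]
      linarith
    have hinv : ∀ w : Euc d, x₁ + (1 / 8 : ℝ) • ((8 : ℝ) • (w - x₁)) = w := fun w => by module
    refine ⟨Dk, fun w hw => ?_, fun w hw => ?_, fun w w' hw hw' => ?_⟩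
    · have h1 := (hk1 _ (hmem w hw)).hasFDerivAt
      have h2 : HasFDerivAt (fun w : Euc d => (8 : ℝ) • (w - x₁))
          ((8 : ℝ) • ContinuousLinearMap.id ℝ (Euc d)) w :=
        ((hasFDerivAt_id w).sub_const x₁).const_smul (8 : ℝ)
      have h3 := h1.comp w h2
      have e1 : ((fun y => h (x₁ + (1 / 8 : ℝ) • y)) ∘ fun w => (8 : ℝ) • (w - x₁)) = h := by
        funext z; simp only [Function.comp, hinv]
      rw [e1] at h3
      rw [hasGradientAt_iff_hasFDerivAt]
      refine h3.congr_fderiv ?_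
      ext z; simp
    · have := hk3 _ (hmem w hw)
      rw [mul_one] at this
      simpa only [hinv] using this
    · have := hk4 _ (hmem w hw) _ (hmem w' hw')
      rwa [mul_one, ← smul_sub, sub_sub_sub_cancel_right, norm_smul,
        Real.norm_of_nonneg (by norm_num)] at this
  have hself : ∀ x : Euc d, ‖x - x‖ < 3 / 32 := fun x => by simp
  have hgrad : ∀ x ∈ ball (0 : Euc d) (3 / 4), ‖gradient h x‖ ≤ 8 * C₀ ∧ |h x| ≤ C₀ := by
    intro x hx
    obtain ⟨Dk, h1, h2, -⟩ := loc x hx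
    rw [(h1 x (hself x)).gradient, norm_smul, Real.norm_of_nonneg (by norm_num)]
    have := h2 x (hself x)
    exact ⟨by linarith [abs_nonneg (h x)], by linarith [norm_nonneg (Dk ((8 : ℝ) • (x - x)))]⟩
  refine ⟨fun x hx => ?_, fun x hx => ?_, fun x hx y hy => ?_⟩
  · obtain ⟨Dk, h1, -⟩ := loc x hx
    have := h1 x (hself x)
    rwa [this.gradient]
  · obtain ⟨h1, h2⟩ := hgrad x hx
    linarith
  · rcases lt_or_ge ‖x - y‖ (3 / 32) with hxy | hxy
    · obtain ⟨Dk, h1, -, h3⟩ := loc y hy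
      rw [(h1 x hxy).gradient, (h1 y (hself y)).gradient, ← smul_sub, norm_smul,
        Real.norm_of_nonneg (by norm_num)]
      have h4 := h3 x y hxy (hself y)
      rw [Real.mul_rpow (by norm_num) (norm_nonneg _)] at h4
      have h5 : (8 : ℝ) ^ α ≤ 8 := by
        have := Real.rpow_le_rpow_of_exponent_le (by norm_num : (1:ℝ) ≤ 8) hα.2.le
        rwa [Real.rpow_one] at this
      have h6 : 0 ≤ C₀ * ‖x - y‖ ^ α := by positivity
      have h7 := mul_le_mul_of_nonneg_right h5 h6
      linarith
    · have h1 := norm_sub_le (gradient h x) (gradient h y)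
      have h2 := (hgrad x hx).1
      have h3 := (hgrad y hy).1
      have h4 : (3 / 32 : ℝ) ≤ ‖x - y‖ ^ α := by
        have a1 := Real.rpow_le_rpow (by norm_num) hxy hα.1.le
        have a2 := Real.rpow_le_rpow_of_exponent_ge (by norm_num : (0:ℝ) < 3 / 32) (by norm_num) hα.2.le
        rw [Real.rpow_one] at a2
        linarith
      nlinarith

end Regularity

/-! ### The approximation lemma -/

section Approximation
variable {d : ℕ}

/-- A solution and its negative are both subsolutions of equations of the same class. -/
theorem smallSub_of_viscSol {Θ ε : ℝ} {F : Mat d → ℝ} {θ f : Euc d → ℝ} {q : Euc d}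
    {u : Euc d → ℝ} (hθ : ∀ x ∈ closedBall (0 : Euc d) 1, -1 < θ x ∧ θ x ≤ Θ)
    (hf : ∀ x ∈ ball (0 : Euc d) 1, |f x| * (1 + ‖q‖) ^ (-(θ x)) ≤ ε) (hu : ViscSol F θ f q u) :
    SmallSub Θ ε F q u ∧ SmallSub Θ ε (fun M => -F (-M)) (-q) (fun x => -u x) := by
  have hθ' : ∀ x ∈ ball (0 : Euc d) 1, -1 < θ x ∧ θ x ≤ Θ :=
    fun x hx => hθ x (ball_subset_closedBall hx)
  refine ⟨⟨θ, f, hθ', hf, hu.1⟩, ⟨θ, fun x => -f x, hθ', fun x hx => ?_, hu.2.reflect⟩⟩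
  rw [abs_neg, norm_neg]
  exact hf x hx

/-- The approximation lemma, by compactness, with the exponent and right-hand side hidden in `SmallSub`. -/
theorem approximation {lam Lam Θ α C₀ : ℝ} (hlam : 0 < lam) (hLam : 0 < Lam)
    (hα : α ∈ Set.Ioo (0 : ℝ) 1) (hC₀ : 0 < C₀)
    (hreg : ∀ G : Mat d → ℝ, UniformlyElliptic lam Lam G →
      ∀ h : Euc d → ℝ, ContinuousOn h (ball 0 1) →
      ViscSolPure G (fun _ => (0:ℝ)) h (ball 0 1) →
      ∃ Dh : Euc d → Euc d,
        (∀ y ∈ ball (0 : Euc d) (3/4), HasGradientAt h (Dh y) y) ∧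
        ∀ K : ℝ, (∀ x ∈ ball (0 : Euc d) 1, |h x| ≤ K) →
          (∀ x ∈ ball (0 : Euc d) (3/4), |h x| + ‖Dh x‖ ≤ C₀ * K) ∧
          ∀ x ∈ ball (0 : Euc d) (3/4), ∀ y ∈ ball (0 : Euc d) (3/4),
            ‖Dh x - Dh y‖ ≤ C₀ * K * ‖x - y‖ ^ α) {δ : ℝ} (hδ : 0 < δ) :
    ∃ ε > 0, ∀ (F : Mat d → ℝ) (q : Euc d) (u : Euc d → ℝ), UniformlyElliptic lam Lam F →
      ContinuousOn u (ball 0 1) → (∀ x ∈ ball (0 : Euc d) 1, |u x| ≤ 1) →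
      SmallSub Θ ε F q u → SmallSub Θ ε (fun M => -F (-M)) (-q) (fun x => -u x) →
      ∃ h : Euc d → ℝ,
        ((∀ y ∈ ball (0 : Euc d) (3/4), HasGradientAt h (gradient h y) y) ∧
        (∀ x ∈ ball (0 : Euc d) (3/4), |h x| + ‖gradient h x‖ ≤ 200 * C₀) ∧
        (∀ x ∈ ball (0 : Euc d) (3/4), ∀ y ∈ ball (0 : Euc d) (3/4),
          ‖gradient h x - gradient h y‖ ≤ 200 * C₀ * ‖x - y‖ ^ α)) ∧
        ∀ x ∈ ball (0 : Euc d) (1/2), |u x - h x| ≤ δ := by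
  obtain ⟨ε₁, hε₁, L, hL, hlip⟩ := lipschitz_est (d := d) (Θ := Θ) hlam hLam.le
  by_contra hcon
  push Not at hcon
  have hεpos : ∀ n : ℕ, 0 < ε₁ * (1 / ((n : ℝ) + 1)) := fun n => by positivity
  have hεle : ∀ n : ℕ, ε₁ * (1 / ((n : ℝ) + 1)) ≤ ε₁ := by
    intro n
    refine mul_le_of_le_one_right hε₁.le ?_
    rw [div_le_one (by positivity)]
    linarith [(Nat.cast_nonneg n : (0 : ℝ) ≤ n)]
  choose F q u hF huc hub hsub hsup hbad using fun n : ℕ => hcon _ (hεpos n)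
  set U : Ultrafilter ℕ := hyperfilter ℕ with hU
  have hε : Tendsto (fun n : ℕ => ε₁ * (1 / ((n : ℝ) + 1))) U (𝓝 0) := by
    have h1 := (tendsto_one_div_add_atTop_nhds_zero_nat (𝕜 := ℝ)).const_mul ε₁
    rw [mul_zero] at h1
    exact h1.mono_left Nat.hyperfilter_le_atTop
  obtain ⟨G, hG, hFG⟩ := exists_limit_operator U hlam hLam.le hF
  obtain ⟨h, hhc, hhb, hconv⟩ := exists_uniform_limit U hL huc hub
    (fun n => hlip (F n) (q n) (u n) _ (hεle n) (hF n) (huc n) (hub n) (hsub n) (hsup n))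
  have hQ := stability U hlam hLam hG hFG huc hhc hsub hε hconv
  have hQ' := stability U hlam hLam hG.reflect (fun M hM => (hFG (-M) hM.neg).neg)
    (fun n => (huc n).neg) hhc.neg hsup hε (fun η hη => by
      filter_upwards [hconv η hη] with n hn x hx
      rw [Pi.neg_apply, Pi.neg_apply, neg_sub_neg, abs_sub_comm]
      exact hn x hx)
  have hR := limit_regular hLam hα hC₀ hreg hG hhc hhb hQ hQ'
  obtain ⟨n, hn⟩ := (hconv δ hδ).exists
  obtain ⟨x, hx, hxδ⟩ := hbad n h hR
  exact absurd (hn x (ball_subset_ball (by norm_num) hx)) (not_le.2 hxδ)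

end Approximation

/-- Approximation Lemma (Lemma 5.1). -/
theorem statement2
    (d : ℕ) (hd : 1 ≤ d) (lam Lam : ℝ) (hlam : 0 < lam) (hlL : lam ≤ Lam)
    (Θ : ℝ) (hΘ : 0 ≤ Θ)
    (α C₀ : ℝ) (hα : α ∈ Set.Ioo (0:ℝ) 1) (hC₀ : 0 < C₀)
    (hreg : ∀ G : Mat d → ℝ, UniformlyElliptic lam Lam G →
      ∀ h : Euc d → ℝ, ContinuousOn h (ball 0 1) →
      ViscSolPure G (fun _ => (0:ℝ)) h (ball 0 1) →
      ∃ Dh : Euc d → Euc d,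
        (∀ y ∈ ball (0 : Euc d) (3/4), HasGradientAt h (Dh y) y) ∧
        ∀ K : ℝ, (∀ x ∈ ball (0 : Euc d) 1, |h x| ≤ K) →
          (∀ x ∈ ball (0 : Euc d) (3/4), |h x| + ‖Dh x‖ ≤ C₀ * K) ∧
          ∀ x ∈ ball (0 : Euc d) (3/4), ∀ y ∈ ball (0 : Euc d) (3/4),
            ‖Dh x - Dh y‖ ≤ C₀ * K * ‖x - y‖ ^ α) :
    ∃ C > 0, ∀ δ > 0, ∃ ε > 0,
      ∀ (F : Mat d → ℝ), UniformlyElliptic lam Lam F →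
      ∀ θ : Euc d → ℝ, ContinuousOn θ (closedBall 0 1) →
        (∀ x ∈ closedBall (0 : Euc d) 1, -1 < θ x ∧ θ x ≤ Θ) →
      ∀ q : Euc d,
      ∀ f : Euc d → ℝ, ContinuousOn f (ball 0 1) →
        (∀ x ∈ ball (0 : Euc d) 1, |f x| * (1 + ‖q‖) ^ (-(θ x)) ≤ ε) →
      ∀ u : Euc d → ℝ, ContinuousOn u (ball 0 1) →
        (∀ x ∈ ball (0 : Euc d) 1, |u x| ≤ 1) →
        ViscSol F θ f q u →
      ∃ h : Euc d → ℝ, ∃ Dh : Euc d → Euc d,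
        (∀ y ∈ ball (0 : Euc d) (3/4), HasGradientAt h (Dh y) y) ∧
        (∀ x ∈ ball (0 : Euc d) (3/4), |h x| + ‖Dh x‖ ≤ C) ∧
        (∀ x ∈ ball (0 : Euc d) (3/4), ∀ y ∈ ball (0 : Euc d) (3/4),
          ‖Dh x - Dh y‖ ≤ C * ‖x - y‖ ^ α) ∧
        ∀ x ∈ ball (0 : Euc d) (1/2), |u x - h x| ≤ δ := by
  refine ⟨200 * C₀, by positivity, fun δ hδ => ?_⟩
  obtain ⟨ε, hε, H⟩ := approximation (Θ := Θ) hlam (hlam.trans_le hlL) hα hC₀ hreg hδ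
  refine ⟨ε, hε, fun F hF θ _ hθ q f _ hf u huc hub hu => ?_⟩
  obtain ⟨hs1, hs2⟩ := smallSub_of_viscSol hθ hf hu
  obtain ⟨h, ⟨h1, h2, h3⟩, h4⟩ := H F q u hF huc hub hs1 hs2
  exact ⟨h, gradient h, h1, h2, h3, h4⟩

end
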